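/- arXiv:2511.03618 — 7 statements merged into one kernel-verified Lean document; each statement's English description precedes it below -/
import Mathlib

section
/- Let S be a nonempty finite type and P : S × S → ℝ a row-stochastic matrix (all entries nonnegative and every row sums to 1) that is irreducible (for all i, j there exists n ∈ ℕ with (P^n) i j > 0) and aperiodic (for every state i, the set of return times {n ≥ 1 : (P^n) i i > 0} has greatest common divisor 1). Then there exists N ≥ 1 such that the matrix power P^N satisfies a Doeblin minorization: there exist ε ∈ (0,1) and a stochastic vector ν : S → ℝ (nonnegative entries summing to 1) such that (P^N) i j ≥ ε · ν j for all i, j. -/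
/-!
Fix a state `o`. The times at which a return to `o` has positive weight form an additive submonoid
of `ℕ`; when its gcd is `1`, it contains every large time. A state that reaches `o` in `n` steps can
spend the remaining `N - n` steps returning to `o`, so for large `N` the whole column `o` of `P ^ N`
is positive, and a small multiple of the point mass at `o` lies below every row.
-/

open Matrix Finset

/-- The set of return times of state `i` under the stochastic matrix `P`. -/
def returnTimes {S : Type*} [Fintype S] [DecidableEq S] (P : Matrix S S ℝ) (i : S) : Set ℕ :=
  {n | 1 ≤ n ∧ 0 < (P ^ n) i i}

open Filter

section NonnegativeMatrix

variable {l m n R : Type*} [Fintype m] [Semiring R] [PartialOrder R] [IsStrictOrderedRing R]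

lemma matrix_mul_apply_pos {A : Matrix l m R} {B : Matrix m n R}
    (hA : ∀ i j, 0 ≤ A i j) (hB : ∀ j k, 0 ≤ B j k) {i : l} {j : m} {k : n}
    (hij : 0 < A i j) (hjk : 0 < B j k) : 0 < (A * B) i k :=
  sum_pos' (fun x _ ↦ mul_nonneg (hA i x) (hB x k)) ⟨j, mem_univ j, mul_pos hij hjk⟩

variable [DecidableEq m] {A : Matrix m m R}

lemma matrix_pow_add_apply_pos (hA : ∀ i j, 0 ≤ A i j) {a b : ℕ} {i j k : m}
    (hij : 0 < (A ^ a) i j) (hjk : 0 < (A ^ b) j k) : 0 < (A ^ (a + b)) i k := by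
  rw [pow_add]
  exact matrix_mul_apply_pos (pow_apply_nonneg hA a) (pow_apply_nonneg hA b) hij hjk

/-- The times at which a return to `o` has positive weight under the nonnegative matrix `A`.
Unlike in `returnTimes`, time `0` is included; this does not affect the gcd. -/
def returnSubmonoid (hA : ∀ i j, 0 ≤ A i j) (o : m) : AddSubmonoid ℕ where
  carrier := {k | 0 < (A ^ k) o o}
  zero_mem' := by simp
  add_mem' := matrix_pow_add_apply_pos hA

lemma eventually_pow_apply_self_pos (hA : ∀ i j, 0 ≤ A i j) (o : m) :
    ∀ᶠ k in atTop, Nat.setGcd (returnSubmonoid hA o) ∣ k → 0 < (A ^ k) o o := by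
  obtain ⟨k₀, hk₀⟩ := Nat.exists_mem_closure_of_ge (returnSubmonoid hA o : Set ℕ)
  rw [AddSubmonoid.closure_eq] at hk₀
  exact eventually_atTop.2 ⟨k₀, hk₀⟩

lemma eventually_pow_apply_pos_of_reaches (hA : ∀ i j, 0 ≤ A i j) {i o : m}
    (hreach : ∃ a, 0 < (A ^ a) i o) (hreturn : ∀ᶠ k in atTop, 0 < (A ^ k) o o) :
    ∀ᶠ N in atTop, 0 < (A ^ N) i o := by
  obtain ⟨a, ha⟩ := hreach
  filter_upwards [(tendsto_sub_atTop_nat a).eventually hreturn, eventually_ge_atTop a]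
    with N hN haN
  simpa only [Nat.add_sub_of_le haN] using matrix_pow_add_apply_pos hA ha hN

end NonnegativeMatrix

section Doeblin

variable {m n R : Type*} [Fintype n] [Semiring R]

/-- The Doeblin minorization condition for the rows of `A`: each of them dominates `ε • ν`, for one
`ε ∈ (0, 1)` and one stochastic vector `ν`. The matrix `A` itself may be rectangular. -/
def HasDoeblinMinorization [PartialOrder R] (A : Matrix m n R) : Prop :=
  ∃ (ε : R) (ν : n → R), 0 < ε ∧ ε < 1 ∧
    (∀ j, 0 ≤ ν j) ∧ (∑ j, ν j = 1) ∧ ∀ i j, ε * ν j ≤ A i j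

variable [LinearOrder R] [IsStrictOrderedRing R] [DenselyOrdered R]

lemma hasDoeblinMinorization_of_col_pos [Finite m] {A : Matrix m n R}
    (hA : ∀ i j, 0 ≤ A i j) {o : n} (hcol : ∀ i, 0 < A i o) : HasDoeblinMinorization A := by
  classical
  have := Fintype.ofFinite m
  obtain ⟨ε, hε_pos, hε_one, hε_col⟩ : ∃ ε, 0 < ε ∧ ε < 1 ∧ ∀ i, ε < A i o := by
    simpa using Finset.exists_between (s := {0}) (t := insert 1 (univ.image (A · o)))
      (by simp) (by simp) (by simpa using hcol)
  have hν := single_mem_stdSimplex R o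
  refine ⟨ε, Pi.single o 1, hε_pos, hε_one, hν.1, hν.2, fun i j ↦ ?_⟩
  obtain rfl | hj := eq_or_ne j o
  · simpa using (hε_col i).le
  · simpa [hj] using hA i j

theorem doeblin_minorization_of_irreducible_aperiodic_general [DecidableEq n]
    {A : Matrix n n R} (hA : ∀ i j, 0 ≤ A i j) (o : n)
    (hreach : ∀ i, ∃ a, 0 < (A ^ a) i o) (haper : Nat.setGcd {k | 0 < (A ^ k) o o} = 1) :
    ∀ᶠ N in atTop, HasDoeblinMinorization (A ^ N) := by
  have hreturn : ∀ᶠ k in atTop, 0 < (A ^ k) o o :=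
    (eventually_pow_apply_self_pos hA o).mono fun k hk ↦ hk (haper.symm ▸ one_dvd k)
  have hcol : ∀ᶠ N in atTop, ∀ i, 0 < (A ^ N) i o :=
    eventually_all.2 fun i ↦ eventually_pow_apply_pos_of_reaches hA (hreach i) hreturn
  exact hcol.mono fun N hN ↦ hasDoeblinMinorization_of_col_pos (pow_apply_nonneg hA N) hN

end Doeblin

/-- Irreducible and aperiodic row-stochastic matrices satisfy a Doeblin minorization
after taking a sufficiently large matrix power. -/
theorem doeblin_minorization_of_irreducible_aperiodic
    {S : Type*} [Fintype S] [Nonempty S] [DecidableEq S] (P : Matrix S S ℝ)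
    (hnonneg : ∀ i j, 0 ≤ P i j)
    (hrowsum : ∀ i, ∑ j, P i j = 1)
    (hirr : ∀ i j, ∃ n : ℕ, 0 < (P ^ n) i j)
    (haper : ∀ i, ∀ d : ℕ, (∀ n ∈ returnTimes P i, d ∣ n) → d = 1) :
    ∃ N : ℕ, 1 ≤ N ∧
      ∃ (ε : ℝ) (ν : S → ℝ), 0 < ε ∧ ε < 1 ∧
        (∀ s, 0 ≤ ν s) ∧ (∑ s, ν s = 1) ∧
        ∀ i j, (P ^ N) i j ≥ ε * ν j := by
  let o : S := Classical.arbitrary S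
  exact ((eventually_ge_atTop 1).and <|
    doeblin_minorization_of_irreducible_aperiodic_general hnonneg o (hirr · o) <|
      haper o _ fun _ hn ↦ Nat.setGcd_dvd_of_mem hn.2).exists
end

section
/- Let S be a finite type and P a row-stochastic matrix on S satisfying a Doeblin minorization (there exist ε ∈ (0,1) and a stochastic vector ν with P i j ≥ ε · ν j for all i, j). Then the map μ ↦ μᵀP, viewed as an operator on the probability simplex of S (stochastic vectors equipped with the ℓ¹ metric), is a contraction: there exists K with 0 < K < 1 such that ‖μᵀP − μ'ᵀP‖₁ ≤ K · ‖μ − μ'‖₁ for all stochastic vectors μ, μ'. -/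
/-!
Since `μ - μ'` has total mass zero, `P` may be replaced on it by the residual matrix
`P i j - ε * ν j`. The residual is nonnegative by the minorization and its rows sum to `1 - ε`, and
the `ℓ¹` norm of `v ᵥ* A` is at most that of `v` times the largest absolute row sum of `A`.
-/

open Finset

section MinorizedMatrix

open scoped Matrix

variable {R ι κ : Type*} [Fintype ι]

theorem vecMul_sub_replicateRow_of_sum_eq_zero [NonUnitalNonAssocRing R] {v : ι → R}
    (hv : ∑ i, v i = 0) (A : Matrix ι κ R) (c : κ → R) :
    v ᵥ* (A - Matrix.replicateRow ι c) = v ᵥ* A := by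
  have hc : v ᵥ* Matrix.replicateRow ι c = 0 := by
    ext j
    simp only [Matrix.vecMul, dotProduct, Matrix.replicateRow_apply, ← sum_mul, hv, zero_mul,
      Pi.zero_apply]
  rw [Matrix.vecMul_sub, hc, sub_zero]

variable [Fintype κ] [CommRing R] [LinearOrder R] [IsOrderedRing R] {A : Matrix ι κ R} {r : R}

theorem sum_abs_vecMul_le (hA : ∀ i, ∑ j, |A i j| ≤ r) (v : ι → R) :
    ∑ j, |(v ᵥ* A) j| ≤ r * ∑ i, |v i| :=
  calc ∑ j, |(v ᵥ* A) j|
      ≤ ∑ j, ∑ i, |v i * A i j| := sum_le_sum fun _ _ => abs_sum_le_sum_abs _ _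
    _ = ∑ i, |v i| * ∑ j, |A i j| := by
        rw [sum_comm]
        simp only [abs_mul, mul_sum]
    _ ≤ ∑ i, |v i| * r := by
        gcongr with i
        exact hA i
    _ = r * ∑ i, |v i| := by rw [← sum_mul, mul_comm]

theorem sum_abs_vecMul_le_of_minorant {c : κ → R} (hc : ∀ i j, c j ≤ A i j)
    (hA : ∀ i, ∑ j, A i j ≤ r) {v : ι → R} (hv : ∑ i, v i = 0) :
    ∑ j, |(v ᵥ* A) j| ≤ (r - ∑ j, c j) * ∑ i, |v i| := by
  have hresidual : ∀ i, ∑ j, |(A - Matrix.replicateRow ι c) i j| ≤ r - ∑ j, c j := fun i =>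
    calc ∑ j, |(A - Matrix.replicateRow ι c) i j|
        = ∑ j, (A i j - c j) := sum_congr rfl fun j _ => abs_of_nonneg (sub_nonneg.2 (hc i j))
      _ = ∑ j, A i j - ∑ j, c j := sum_sub_distrib _ _
      _ ≤ r - ∑ j, c j := sub_le_sub_right (hA i) _
  rw [← vecMul_sub_replicateRow_of_sum_eq_zero hv A c]
  exact sum_abs_vecMul_le hresidual v

theorem contraction_on_simplex_of_doeblin_general {P : Matrix ι κ R} {ε : R} {ν : κ → R}
    (hrow : ∀ i, ∑ j, P i j ≤ 1) (hν : ∑ j, ν j = 1) (hmin : ∀ i j, ε * ν j ≤ P i j)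
    {μ μ' : ι → R} (hmass : ∑ i, μ i = ∑ i, μ' i) :
    ∑ j, |(μ ᵥ* P) j - (μ' ᵥ* P) j| ≤ (1 - ε) * ∑ i, |μ i - μ' i| := by
  have hdiff : ∑ i, (μ - μ') i = 0 := by
    simp only [Pi.sub_apply, sum_sub_distrib, hmass, sub_self]
  simpa only [Matrix.sub_vecMul, Pi.sub_apply, ← mul_sum, hν, mul_one] using
    sum_abs_vecMul_le_of_minorant hmin hrow hdiff

end MinorizedMatrix

/-- A row-stochastic matrix satisfying a Doeblin minorization acts as a contraction
(in the ℓ¹ metric) on the probability simplex via `μ ↦ μᵀ P`. -/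
theorem contraction_on_simplex_of_doeblin
    {S : Type*} [Fintype S] (P : Matrix S S ℝ)
    (hnonneg : ∀ i j, 0 ≤ P i j)
    (hrowsum : ∀ i, ∑ j, P i j = 1)
    (hdoeblin : ∃ (ε : ℝ) (ν : S → ℝ), 0 < ε ∧ ε < 1 ∧
      (∀ s, 0 ≤ ν s) ∧ (∑ s, ν s = 1) ∧ ∀ i j, P i j ≥ ε * ν j) :
    ∃ K : ℝ, 0 < K ∧ K < 1 ∧
      ∀ μ μ' : S → ℝ,
        (∀ s, 0 ≤ μ s) → (∑ s, μ s = 1) →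
        (∀ s, 0 ≤ μ' s) → (∑ s, μ' s = 1) →
        ∑ j, |(∑ i, μ i * P i j) - (∑ i, μ' i * P i j)| ≤ K * ∑ s, |μ s - μ' s| := by
  obtain ⟨ε, ν, hε0, hε1, -, hν, hmin⟩ := hdoeblin
  exact ⟨1 - ε, sub_pos.2 hε1, sub_lt_self 1 hε0, fun μ μ' _ hμ _ hμ' =>
    contraction_on_simplex_of_doeblin_general (fun i => (hrowsum i).le) hν hmin (hμ.trans hμ'.symm)⟩
end

section
/- Let S be a nonempty finite type and P a row-stochastic matrix on S that is irreducible and aperiodic. Then there exists a unique stochastic vector μ : S → ℝ that is stationary for P, i.e., ∑ i, μ i · P i j = μ j for all j. -/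
open Finset

/-!
Since `P` fixes the all-ones column vector, `1` is an eigenvalue of `P`, so some `v ≠ 0` satisfies
`v ᵥ* P = v`. Entrywise `|v| ≤ |v| ᵥ* P`, and both sides have the same total mass, so `|v|` is fixed
as well; normalizing it gives existence.

For uniqueness, let `v` be the difference of two stationary vectors and `k` a state accessible from
every state. If `v ≠ 0`, then `v` has a positive entry, because its total mass is zero. The
nonnegative fixed vector `v + |v|` is positive exactly where `v` is, and its positivity spreads
along paths of positive probability, so `v k > 0`. The same applies to `-v`, so `v k < 0`.
-/

open Matrix

section RowStochastic

variable {R S : Type*} [Fintype S]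

lemma exists_vecMul_eq_self_iff_exists_mulVec_eq_self [CommRing R] [IsDomain R]
    {M : Matrix S S R} :
    (∃ v : S → R, v ≠ 0 ∧ v ᵥ* M = v) ↔ ∃ u : S → R, u ≠ 0 ∧ M *ᵥ u = u := by
  classical
  have hdet := (exists_vecMul_eq_zero_iff (M := M - 1)).trans exists_mulVec_eq_zero_iff.symm
  simpa only [vecMul_sub, vecMul_one, sub_mulVec, one_mulVec, sub_eq_zero] using hdet

lemma vecMul_pow_eq_self [Semiring R] [DecidableEq S] {M : Matrix S S R} {v : S → R}
    (hv : v ᵥ* M = v) (n : ℕ) : v ᵥ* M ^ n = v := by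
  induction n with
  | zero => rw [pow_zero, vecMul_one]
  | succ n ih => rw [pow_succ, ← vecMul_vecMul, ih, hv]

lemma vecMul_apply_pos [Semiring R] [PartialOrder R] [IsStrictOrderedRing R] {T : Type*}
    {M : Matrix S T R} (hM : ∀ i j, 0 ≤ M i j) {w : S → R} (hw : 0 ≤ w) {i : S} {j : T}
    (hi : 0 < w i) (hij : 0 < M i j) : 0 < (w ᵥ* M) j :=
  sum_pos' (fun l _ ↦ mul_nonneg (hw l) (hM l j)) ⟨i, mem_univ i, mul_pos hi hij⟩

lemma abs_vecMul_le [Ring R] [LinearOrder R] [IsOrderedRing R] {T : Type*} {M : Matrix S T R}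
    (hM : ∀ i j, 0 ≤ M i j) (v : S → R) : |v ᵥ* M| ≤ |v| ᵥ* M := fun j ↦
  calc |∑ i, v i * M i j| ≤ ∑ i, |v i * M i j| := abs_sum_le_sum_abs _ _
    _ = ∑ i, |v i| * M i j := by simp only [abs_mul, abs_of_nonneg (hM _ j)]

variable [DecidableEq S]

lemma sum_vecMul_of_mem_rowStochastic [Semiring R] [PartialOrder R] [IsOrderedRing R]
    {P : Matrix S S R} (hP : P ∈ rowStochastic R S) (v : S → R) :
    ∑ j, (v ᵥ* P) j = ∑ i, v i := by
  rw [← dotProduct_one, ← dotProduct_mulVec, one_vecMul_of_mem_rowStochastic hP, dotProduct_one]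

lemma abs_vecMul_eq_self [Ring R] [LinearOrder R] [IsOrderedRing R] {P : Matrix S S R}
    (hP : P ∈ rowStochastic R S) {v : S → R} (hv : v ᵥ* P = v) : |v| ᵥ* P = |v| := by
  have hle : |v| ≤ |v| ᵥ* P := by
    simpa only [hv] using abs_vecMul_le (mem_rowStochastic.1 hP).1 v
  have hmass : ∑ j, |v| j = ∑ j, (|v| ᵥ* P) j := (sum_vecMul_of_mem_rowStochastic hP _).symm
  funext j
  exact ((sum_eq_sum_iff_of_le fun j _ ↦ hle j).1 hmass j (mem_univ j)).symm

lemma pos_of_vecMul_eq_self [Ring R] [LinearOrder R] [IsStrictOrderedRing R] {P : Matrix S S R}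
    (hP : P ∈ rowStochastic R S) {v : S → R} (hv : v ᵥ* P = v) {i k : S} (hi : 0 < v i)
    (hik : ∃ n : ℕ, 0 < (P ^ n) i k) : 0 < v k := by
  obtain ⟨n, hn⟩ := hik
  have hfix : (v + |v|) ᵥ* P = v + |v| := by rw [add_vecMul, hv, abs_vecMul_eq_self hP hv]
  have hnonneg : 0 ≤ v + |v| := fun l ↦ add_abs_nonneg (v l)
  have hpos : 0 < (v + |v|) k := by
    rw [← vecMul_pow_eq_self hfix n]
    exact vecMul_apply_pos (mem_rowStochastic.1 (pow_mem hP n)).1 hnonneg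
      (add_pos_of_pos_of_nonneg hi (abs_nonneg (v i))) hn
  contrapose! hpos
  rw [Pi.add_apply, Pi.abs_apply, abs_of_nonpos hpos, add_neg_cancel]

lemma eq_zero_of_vecMul_eq_self [Ring R] [LinearOrder R] [IsStrictOrderedRing R]
    {P : Matrix S S R} (hP : P ∈ rowStochastic R S) {k : S} (hk : ∀ i, ∃ n : ℕ, 0 < (P ^ n) i k)
    {v : S → R} (hv : v ᵥ* P = v) (hsum : ∑ i, v i = 0) : v = 0 := by
  have pos_of_ne_zero {u : S → R} (hu : u ᵥ* P = u) (hu_sum : ∑ i, u i = 0) (hne : u ≠ 0) :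
      0 < u k := by
    obtain ⟨l, hl⟩ := Function.ne_iff.1 hne
    obtain ⟨i, -, hi⟩ := exists_pos_of_sum_zero_of_exists_nonzero u hu_sum ⟨l, mem_univ l, hl⟩
    exact pos_of_vecMul_eq_self hP hu hi (hk i)
  by_contra hne
  have hneg : 0 < (-v) k :=
    pos_of_ne_zero (by rw [neg_vecMul, hv]) (by simp [hsum]) (neg_ne_zero.2 hne)
  exact (pos_of_ne_zero hv hsum hne).not_gt (neg_pos.1 hneg)

variable [Field R] [LinearOrder R] [IsStrictOrderedRing R] {P : Matrix S S R}

lemma exists_mem_stdSimplex_vecMul_eq_self [Nonempty S] (hP : P ∈ rowStochastic R S) :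
    ∃ μ ∈ stdSimplex R S, μ ᵥ* P = μ := by
  obtain ⟨v, hne, hv⟩ := exists_vecMul_eq_self_iff_exists_mulVec_eq_self.2
    ⟨1, one_ne_zero, one_vecMul_of_mem_rowStochastic hP⟩
  have hmass : 0 < ∑ i, |v| i := by
    obtain ⟨i, hi⟩ := Function.ne_iff.1 hne
    exact sum_pos' (fun l _ ↦ abs_nonneg (v l)) ⟨i, mem_univ i, abs_pos.2 hi⟩
  refine ⟨(∑ i, |v| i)⁻¹ • |v|, ⟨fun i ↦ ?_, ?_⟩, ?_⟩
  · exact mul_nonneg (inv_nonneg.2 hmass.le) (abs_nonneg (v i))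
  · simp only [Pi.smul_apply, smul_eq_mul, ← mul_sum, inv_mul_cancel₀ hmass.ne']
  · rw [smul_vecMul, abs_vecMul_eq_self hP hv]

theorem stationary_distribution_uniquely_exists_general (hP : P ∈ rowStochastic R S)
    (hk : ∃ k, ∀ i, ∃ n : ℕ, 0 < (P ^ n) i k) : ∃! μ, μ ∈ stdSimplex R S ∧ μ ᵥ* P = μ := by
  obtain ⟨k, hk⟩ := hk
  have : Nonempty S := ⟨k⟩
  refine existsUnique_of_exists_of_unique (exists_mem_stdSimplex_vecMul_eq_self hP) ?_
  rintro μ ν ⟨⟨-, hμ_sum⟩, hμ⟩ ⟨⟨-, hν_sum⟩, hν⟩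
  refine sub_eq_zero.1 (eq_zero_of_vecMul_eq_self hP hk ?_ ?_)
  · rw [sub_vecMul, hμ, hν]
  · simp only [Pi.sub_apply, sum_sub_distrib, hμ_sum, hν_sum, sub_self]

end RowStochastic

/-- An irreducible aperiodic row-stochastic matrix on a nonempty finite type has a
unique stationary distribution. -/
theorem stationary_distribution_uniquely_exists
    {S : Type*} [Fintype S] [Nonempty S] [DecidableEq S] (P : Matrix S S ℝ)
    (hnonneg : ∀ i j, 0 ≤ P i j)
    (hrowsum : ∀ i, ∑ j, P i j = 1)
    (hirr : ∀ i j, ∃ n : ℕ, 0 < (P ^ n) i j)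
    (haper : ∀ i, ∀ d : ℕ, (∀ n ∈ returnTimes P i, d ∣ n) → d = 1) :
    ∃! μ : S → ℝ, ((∀ s, 0 ≤ μ s) ∧ ∑ s, μ s = 1) ∧ ∀ j, ∑ i, μ i * P i j = μ j := by
  simpa only [stdSimplex, Set.mem_ofPred_eq, funext_iff, vecMul, dotProduct] using
    stationary_distribution_uniquely_exists_general
      (mem_rowStochastic_iff_sum.2 ⟨hnonneg, hrowsum⟩) ⟨Classical.arbitrary S, (hirr · _)⟩
end

section
/- (Special case of the Robbins–Siegmund theorem.) Let (Ω, 𝓕, μ) be a probability space, {𝓕ₙ} a filtration, and {zₙ : Ω → ℝ} a sequence of functions such that each zₙ is measurable, integrable, adapted to {𝓕ₙ}, and satisfies zₙ ≥ 0 almost surely. Let {Tₙ} be a sequence of positive reals with ∑ₙ Tₙ = ∞ and ∑ₙ Tₙ² < ∞. Suppose {zₙ} is almost a supermartingale: there exists a constant C ≥ 0 such that for all n, E[z_{n+1} | 𝓕ₙ] ≤ (1 − Tₙ) · zₙ + C · Tₙ² almost surely. Then zₙ → 0 almost surely as n → ∞. -/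
open MeasureTheory Filter Finset

/-!
If `E[f (n + 1) | ℱ n] ≤ f n - ζ n + ξ n`, then `f n + ∑ k < n, (ζ k - ξ k)` is a supermartingale.
Its negative part is at most `∑ k < n, |ξ k|`, hence bounded in `L¹`, so it converges almost surely;
removing the convergent series `∑ ξ k` shows that `f n + ∑ k < n, ζ k` converges. As both terms are
nonnegative, `∑ ζ k` and then `f n` converge. With `ζ n = T n * f n` the limit of `f` must be zero,
because `∑ T k` diverges.
-/

lemma eq_zero_of_tendsto_of_summable_mul {ι 𝕜 : Type*} [NormedField 𝕜] [CompleteSpace 𝕜]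
    {T a : ι → 𝕜} {L : 𝕜} (ha : Tendsto a cofinite (nhds L))
    (hTa : Summable fun i => ‖T i * a i‖) (hT : ¬ Summable T) : L = 0 := by
  by_contra hL
  have hquot : Summable fun i => T i * a i * (a i)⁻¹ :=
    hTa.mul_tendsto_const (ha.inv₀ hL)
  refine hT ((summable_congr_cofinite ?_).1 hquot)
  filter_upwards [ha.eventually_ne hL] with i hi
  exact mul_inv_cancel_right₀ hi (T i)

lemma summable_of_tendsto_add_sum_range {a b : ℕ → ℝ} {c : ℝ} (ha : ∀ n, 0 ≤ a n)
    (hb : ∀ n, 0 ≤ b n) (h : Tendsto (fun n => a n + ∑ k ∈ range n, b k) atTop (nhds c)) :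
    Summable b := by
  obtain ⟨B, hB⟩ := h.bddAbove_range
  exact summable_of_sum_range_le hb fun n =>
    (le_add_of_nonneg_left (ha n)).trans (hB ⟨n, rfl⟩)

lemma exists_tendsto_and_summable_of_tendsto_add_sum_range_sub {a b d : ℕ → ℝ} {c : ℝ}
    (ha : ∀ n, 0 ≤ a n) (hb : ∀ n, 0 ≤ b n) (hd : Summable d)
    (h : Tendsto (fun n => a n + ∑ k ∈ range n, (b k - d k)) atTop (nhds c)) :
    (∃ L, Tendsto a atTop (nhds L)) ∧ Summable b := by
  have hab : Tendsto (fun n => a n + ∑ k ∈ range n, b k) atTop (nhds (c + ∑' k, d k)) :=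
    (h.add hd.hasSum.tendsto_sum_nat).congr fun n => by rw [sum_sub_distrib]; ring
  have hb_sum : Summable b := summable_of_tendsto_add_sum_range ha hb hab
  exact ⟨⟨_, (hab.sub hb_sum.hasSum.tendsto_sum_nat).congr fun n => add_sub_cancel_right _ _⟩,
    hb_sum⟩

lemma ae_summable_norm_of_summable_integral_norm {Ω ι E : Type*} {m : MeasurableSpace Ω}
    {μ : Measure Ω} [Countable ι] [NormedAddCommGroup E] {g : ι → Ω → E}
    (hg : ∀ i, Integrable (g i) μ)
    (hg_sum : Summable fun i => ∫ ω, ‖g i ω‖ ∂μ) :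
    ∀ᵐ ω ∂μ, Summable fun i => ‖g i ω‖ := by
  refine summable_norm_of_tsum_eLpNorm_ne_top le_rfl (fun i => (hg i).aestronglyMeasurable) ?_
  simp only [eLpNorm_one_eq_lintegral_enorm, ← ofReal_integral_norm_eq_lintegral_enorm (hg _)]
  exact hg_sum.tsum_ofReal_ne_top

section Supermartingale

variable {Ω : Type*} {m : MeasurableSpace Ω} {μ : Measure Ω} [IsFiniteMeasure μ]
  {ℱ : Filtration ℕ m}

lemma supermartingale_add_sum_range {E : Type*} [NormedAddCommGroup E] [NormedSpace ℝ E]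
    [CompleteSpace E] [PartialOrder E] [IsOrderedAddMonoid E] [ClosedIciTopology E]
    [IsOrderedModule ℝ E] {f g : ℕ → Ω → E}
    (hf : StronglyAdapted ℱ f) (hg : StronglyAdapted ℱ g)
    (hf_int : ∀ n, Integrable (f n) μ) (hg_int : ∀ n, Integrable (g n) μ)
    (hfg : ∀ n, μ[f (n + 1) | ℱ n] ≤ᵐ[μ] f n - g n) :
    Supermartingale (fun n => f n + ∑ k ∈ range n, g k) ℱ μ := by
  have hsum_meas {n i : ℕ} (hni : ∀ k ∈ range n, k ≤ i) :
      StronglyMeasurable[ℱ i] (∑ k ∈ range n, g k) :=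
    Finset.stronglyMeasurable_sum _ fun k hk => hg.stronglyMeasurable_le (hni k hk)
  have hsum_int (n : ℕ) : Integrable (∑ k ∈ range n, g k) μ :=
    integrable_finsetSum' _ fun k _ => hg_int k
  refine supermartingale_nat
    (fun n => (hf n).add (hsum_meas fun k hk => (mem_range.1 hk).le))
    (fun n => (hf_int n).add (hsum_int n)) fun n => ?_
  have hpred : μ[∑ k ∈ range (n + 1), g k | ℱ n] = ∑ k ∈ range (n + 1), g k :=
    condExp_of_stronglyMeasurable (ℱ.le n)
      (hsum_meas fun k hk => mem_range_succ_iff.1 hk) (hsum_int _)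
  filter_upwards [hfg n, condExp_add (hf_int (n + 1)) (hsum_int (n + 1)) (ℱ n)]
    with ω hle hadd
  calc (μ[f (n + 1) + ∑ k ∈ range (n + 1), g k | ℱ n]) ω
      = (μ[f (n + 1) | ℱ n]) ω + (∑ k ∈ range (n + 1), g k) ω := by
        rw [hadd, Pi.add_apply, hpred]
    _ ≤ (f n - g n) ω + (∑ k ∈ range (n + 1), g k) ω := by gcongr
    _ = (f n + ∑ k ∈ range n, g k) ω := by
        rw [sum_range_succ]
        simp only [Pi.add_apply, Pi.sub_apply]
        abel

lemma ae_exists_tendsto_of_supermartingale_of_integral_negPart_le {Y : ℕ → Ω → ℝ}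
    (hY : Supermartingale Y ℱ μ) {R : ℝ} (hR : ∀ n, ∫ ω, (Y n ω)⁻ ∂μ ≤ R) :
    ∀ᵐ ω ∂μ, ∃ c, Tendsto (fun n => Y n ω) atTop (nhds c) := by
  have hmean (n : ℕ) : ∫ ω, Y n ω ∂μ ≤ ∫ ω, Y 0 ω ∂μ := by
    simpa using hY.setIntegral_le (Nat.zero_le n) MeasurableSet.univ
  have hL1 (n : ℕ) : ∫ ω, ‖Y n ω‖ ∂μ ≤ 2 * R + ∫ ω, Y 0 ω ∂μ := by
    simp only [Real.norm_eq_abs,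
      integral_abs_eq_two_mul_integral_negPart_add_integral (hY.integrable n)]
    linarith [hmean n, hR n]
  have hbdd (n : ℕ) :
      eLpNorm ((-Y) n) 1 μ ≤ ((2 * R + ∫ ω, Y 0 ω ∂μ).toNNReal : ENNReal) := by
    rw [Pi.neg_apply, eLpNorm_neg, eLpNorm_one_eq_lintegral_enorm,
      ← ofReal_integral_norm_eq_lintegral_enorm (hY.integrable n)]
    exact ENNReal.ofReal_le_ofReal (hL1 n)
  filter_upwards [hY.neg.exists_ae_tendsto_of_bdd hbdd] with ω ⟨c, hc⟩
  exact ⟨-c, by simpa using hc.neg⟩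

end Supermartingale

section RobbinsSiegmund

variable {Ω : Type*} {m : MeasurableSpace Ω} {μ : Measure Ω}

lemma integral_negPart_add_sum_range_sub_le {f ζ ξ : ℕ → Ω → ℝ}
    (hξ_int : ∀ n, Integrable (ξ n) μ)
    (hf_nonneg : ∀ n, 0 ≤ᵐ[μ] f n) (hζ_nonneg : ∀ n, 0 ≤ᵐ[μ] ζ n)
    (hξ_sum : Summable fun n => ∫ ω, ‖ξ n ω‖ ∂μ) (n : ℕ) :
    ∫ ω, ((f n + ∑ k ∈ range n, (ζ k - ξ k)) ω)⁻ ∂μ ≤ ∑' k, ∫ ω, ‖ξ k ω‖ ∂μ := by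
  have hneg : ∀ᵐ ω ∂μ,
      ((f n + ∑ k ∈ range n, (ζ k - ξ k)) ω)⁻ ≤ ∑ k ∈ range n, ‖ξ k ω‖ := by
    filter_upwards [hf_nonneg n, ae_all_iff.2 hζ_nonneg] with ω hf hζ
    have hζ_sum : 0 ≤ ∑ k ∈ range n, ζ k ω := sum_nonneg fun k _ => hζ k
    have hξ_le : ∑ k ∈ range n, ξ k ω ≤ ∑ k ∈ range n, ‖ξ k ω‖ :=
      sum_le_sum fun k _ => Real.le_norm_self _
    have hξ_nonneg : 0 ≤ ∑ k ∈ range n, ‖ξ k ω‖ := sum_nonneg fun k _ => norm_nonneg _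
    simp only [Pi.zero_apply] at hf
    simp only [Pi.add_apply, Finset.sum_apply, Pi.sub_apply, sum_sub_distrib]
    exact sup_le (by linarith) hξ_nonneg
  calc ∫ ω, ((f n + ∑ k ∈ range n, (ζ k - ξ k)) ω)⁻ ∂μ
      ≤ ∫ ω, ∑ k ∈ range n, ‖ξ k ω‖ ∂μ :=
        integral_mono_of_nonneg (ae_of_all _ fun _ => negPart_nonneg _)
          (integrable_finsetSum _ fun k _ => (hξ_int k).norm) hneg
    _ = ∑ k ∈ range n, ∫ ω, ‖ξ k ω‖ ∂μ :=
        integral_finsetSum _ fun k _ => (hξ_int k).norm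
    _ ≤ ∑' k, ∫ ω, ‖ξ k ω‖ ∂μ :=
        hξ_sum.sum_le_tsum _ fun k _ => integral_nonneg fun _ => norm_nonneg _

variable [IsFiniteMeasure μ] {ℱ : Filtration ℕ m}

theorem ae_exists_tendsto_and_summable_of_condExp_le {f ζ ξ : ℕ → Ω → ℝ}
    (hf : StronglyAdapted ℱ f) (hζ : StronglyAdapted ℱ ζ) (hξ : StronglyAdapted ℱ ξ)
    (hf_int : ∀ n, Integrable (f n) μ) (hζ_int : ∀ n, Integrable (ζ n) μ)
    (hξ_int : ∀ n, Integrable (ξ n) μ)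
    (hf_nonneg : ∀ n, 0 ≤ᵐ[μ] f n) (hζ_nonneg : ∀ n, 0 ≤ᵐ[μ] ζ n)
    (hξ_sum : Summable fun n => ∫ ω, ‖ξ n ω‖ ∂μ)
    (hle : ∀ n, μ[f (n + 1) | ℱ n] ≤ᵐ[μ] f n - ζ n + ξ n) :
    ∀ᵐ ω ∂μ, (∃ L, Tendsto (fun n => f n ω) atTop (nhds L)) ∧ Summable fun n => ζ n ω := by
  have hY : Supermartingale (fun n => f n + ∑ k ∈ range n, (ζ k - ξ k)) ℱ μ :=
    supermartingale_add_sum_range hf (hζ.sub hξ) hf_int (fun n => (hζ_int n).sub (hξ_int n))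
      fun n => (hle n).trans_eq (by rw [sub_add])
  filter_upwards [ae_all_iff.2 hf_nonneg, ae_all_iff.2 hζ_nonneg,
    ae_summable_norm_of_summable_integral_norm hξ_int hξ_sum,
    ae_exists_tendsto_of_supermartingale_of_integral_negPart_le hY
      (integral_negPart_add_sum_range_sub_le hξ_int hf_nonneg hζ_nonneg hξ_sum)]
    with ω hfω hζω hξω ⟨c, hc⟩
  refine exists_tendsto_and_summable_of_tendsto_add_sum_range_sub hfω hζω hξω.of_norm (c := c) ?_
  simpa only [Pi.add_apply, Finset.sum_apply, Pi.sub_apply] using hc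

theorem ae_tendsto_zero_of_almost_supermartingale_general {f ξ : ℕ → Ω → ℝ} {T : ℕ → ℝ}
    (hf : StronglyAdapted ℱ f) (hξ : StronglyAdapted ℱ ξ)
    (hf_int : ∀ n, Integrable (f n) μ) (hξ_int : ∀ n, Integrable (ξ n) μ)
    (hf_nonneg : ∀ n, 0 ≤ᵐ[μ] f n) (hT_nonneg : ∀ n, 0 ≤ T n) (hT : ¬ Summable T)
    (hξ_sum : Summable fun n => ∫ ω, ‖ξ n ω‖ ∂μ)
    (hle : ∀ n, μ[f (n + 1) | ℱ n] ≤ᵐ[μ] fun ω => (1 - T n) * f n ω + ξ n ω) :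
    ∀ᵐ ω ∂μ, Tendsto (fun n => f n ω) atTop (nhds 0) := by
  have hTf_nonneg (n : ℕ) : 0 ≤ᵐ[μ] T n • f n := by
    filter_upwards [hf_nonneg n] with ω hω using mul_nonneg (hT_nonneg n) hω
  have hle' (n : ℕ) : μ[f (n + 1) | ℱ n] ≤ᵐ[μ] f n - T n • f n + ξ n := by
    filter_upwards [hle n] with ω hω
    simp only [Pi.add_apply, Pi.sub_apply, Pi.smul_apply, smul_eq_mul]
    linarith
  filter_upwards [ae_exists_tendsto_and_summable_of_condExp_le hf
    (fun n => (hf n).const_smul (T n)) hξ hf_int (fun n => (hf_int n).smul (T n)) hξ_int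
    hf_nonneg hTf_nonneg hξ_sum hle'] with ω ⟨⟨L, hL⟩, hTf⟩
  have hL_cofinite : Tendsto (fun n => f n ω) cofinite (nhds L) := Nat.cofinite_eq_atTop ▸ hL
  rwa [eq_zero_of_tendsto_of_summable_mul hL_cofinite hTf.norm hT] at hL

end RobbinsSiegmund

/-- A special case of the Robbins–Siegmund theorem: an "almost supermartingale"
with Robbins–Monro coefficients converges to zero almost surely. -/
theorem ae_tendsto_zero_of_almost_supermartingale
    {Ω : Type*} {m : MeasurableSpace Ω} {μ : Measure Ω} [IsProbabilityMeasure μ]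
    (ℱ : Filtration ℕ m) (f : ℕ → Ω → ℝ)
    (hAdapt : Adapted ℱ f)
    (hfm : ∀ n, Measurable (f n))
    (hfInt : ∀ n, Integrable (f n) μ)
    (hfnonneg : ∀ n, 0 ≤ᵐ[μ] f n)
    (T : ℕ → ℝ)
    (hTpos : ∀ n, 0 < T n)
    (hTsum : Tendsto (fun n => ∑ k ∈ Finset.range n, T k) atTop atTop)
    (hTsqsum : Summable (fun n => (T n) ^ 2))
    (hAlmostSupermartingale : ∃ C ≥ (0 : ℝ), ∀ n,
      μ[f (n + 1) | ℱ n] ≤ᵐ[μ] (fun ω => (1 - T n) * f n ω + C * T n ^ 2)) :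
    ∀ᵐ ω ∂μ, Tendsto (fun n => f n ω) atTop (nhds 0) := by
  obtain ⟨C, -, hle⟩ := hAlmostSupermartingale
  exact ae_tendsto_zero_of_almost_supermartingale_general hAdapt.stronglyAdapted
    (stronglyAdapted_const' ℱ fun n => C * T n ^ 2) hfInt (fun n => integrable_const _) hfnonneg
    (fun n => (hTpos n).le)
    ((not_summable_iff_tendsto_nat_atTop_of_nonneg fun n => (hTpos n).le).2 hTsum)
    (by simpa using (hTsqsum.mul_left C).norm) hle
end

section
/- For any real p ≥ 2, the function φ : ℝᵈ → ℝ defined by φ(x) = ½‖x‖ₚ² (half the squared ℓₚ norm) is smooth in the sense that there exists a constant C ≥ 0 such that for all x, y ∈ ℝᵈ: φ(y) ≤ φ(x) + ⟨∇φ(x), y − x⟩ + C·‖y − x‖₂². -/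
/-! Put `N = lpNorm p` and `J x = (|x i| ^ (p - 2) * x i)ᵢ`, so that `∇(½ N²) = N ^ (2 - p) • J`.
Restricted to a line `t ↦ x + t • h` avoiding the origin, `½ N²` has second derivative
`(2 - p) N ^ (2 - 2p) ⟪J, h⟫² + (p - 1) N ^ (2 - p) ∑ |x i + t h i| ^ (p - 2) h i ^ 2`.
The first term is nonpositive because `p ≥ 2`, and Hölder's inequality with exponents `p / (p - 2)`
and `p / 2` bounds the second by `(p - 1) N(h)²`; Taylor's formula then gives the inequality with
error `½ (p - 1) N(h)² ≤ ½ (p - 1) ‖h‖²`. On a line through the origin `½ N²` is a quadratic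
polynomial with second derivative `N(h)²`. -/

open Finset
open scoped RealInnerProductSpace

/-- The ℓₚ norm of a vector in ℝᵈ, for a real exponent `p`. -/
noncomputable def lpNorm {d : ℕ} (p : ℝ) (x : EuclideanSpace ℝ (Fin d)) : ℝ :=
  (∑ i, |x i| ^ p) ^ (1 / p)

lemma le_taylor_two_of_hasDerivAt2_le {f f' f'' : ℝ → ℝ} {a b K : ℝ} (hab : a < b)
    (hf : ∀ t, HasDerivAt f (f' t) t) (hf' : ∀ t, HasDerivAt f' (f'' t) t)
    (hK : ∀ t, f'' t ≤ K) :
    f b ≤ f a + f' a * (b - a) + K / 2 * (b - a) ^ 2 := by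
  have hg : ∀ t, HasDerivAt (fun s => f s - K / 2 * (s - a) ^ 2) (f' t - K * (t - a)) t :=
    fun t => ((hf t).sub ((((hasDerivAt_id t).sub_const a).pow 2).const_mul (K / 2))).congr_deriv
      (by simp only [id_eq, Nat.cast_ofNat]; ring)
  have hg' : ∀ t, HasDerivAt (fun s => f' s - K * (s - a)) (f'' t - K) t :=
    fun t => ((hf' t).sub (((hasDerivAt_id t).sub_const a).const_mul K)).congr_deriv (by ring)
  have hconcave : ConcaveOn ℝ Set.univ fun s => f s - K / 2 * (s - a) ^ 2 :=
    concaveOn_of_hasDerivWithinAt2_nonpos convex_univ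
      (fun t _ => (hg t).continuousAt.continuousWithinAt) (fun t _ => (hg t).hasDerivWithinAt)
      (fun t _ => (hg' t).hasDerivWithinAt) fun t _ => sub_nonpos.2 (hK t)
  have hslope := hconcave.slope_le_of_hasDerivAt (Set.mem_univ a) (Set.mem_univ b) hab (hg a)
  rw [slope_def_field, div_le_iff₀ (sub_pos.2 hab)] at hslope
  linarith

lemma hasDerivAt_abs_rpow_mul_self {r : ℝ} (hr : 0 ≤ r) (u : ℝ) :
    HasDerivAt (fun t : ℝ => |t| ^ r * t) ((r + 1) * |u| ^ r) u := by
  rcases eq_or_ne u 0 with rfl | hu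
  · have hslope : Set.EqOn (slope (fun t : ℝ => |t| ^ r * t) 0) (fun t => |t| ^ r) {0}ᶜ :=
      fun t ht => by simp [slope_def_field, mul_div_cancel_right₀ _ (show t ≠ 0 from ht)]
    have hvalue : (r + 1) * |(0 : ℝ)| ^ r = |(0 : ℝ)| ^ r := by
      rcases hr.eq_or_lt with rfl | hr
      · simp
      · simp [Real.zero_rpow hr.ne']
    rw [hasDerivAt_iff_tendsto_slope, hvalue]
    exact ((continuous_abs.rpow_const fun _ => .inr hr).continuousAt.mono_left
      nhdsWithin_le_nhds).congr' hslope.symm.eventuallyEq_nhdsWithin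
  · refine (((hasDerivAt_abs hu).rpow_const (p := r) (.inl (abs_ne_zero.2 hu))).mul
      (hasDerivAt_id u)).congr_deriv ?_
    have hsign : (SignType.sign u : ℝ) * u = |u| := sign_mul_self u
    have hpow : |u| ^ (r - 1) * |u| = |u| ^ r := by
      rw [← Real.rpow_add_one (abs_ne_zero.2 hu), sub_add_cancel]
    simp only [id_eq]
    linear_combination r * |u| ^ (r - 1) * hsign + r * hpow

lemma hasDerivAt_line_of_hasGradientAt {E : Type*} [NormedAddCommGroup E]
    [InnerProductSpace ℝ E] [CompleteSpace E] {f : E → ℝ} {v x h : E} {t : ℝ}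
    (hf : HasGradientAt f v (x + t • h)) :
    HasDerivAt (fun s : ℝ => f (x + s • h)) ⟪v, h⟫ t := by
  have hline : HasDerivAt (fun s : ℝ => x + s • h) h t := by
    simpa using ((hasDerivAt_id t).smul_const h).const_add x
  exact (hf.hasFDerivAt.comp_hasDerivAt t hline).congr_deriv (by simp)

section LpDualityMap

variable {ι : Type*} {p : ℝ}

/-- The duality map of `ℓₚ` with gauge `t ↦ t ^ (p - 1)`, namely the gradient of `‖·‖ₚ ^ p / p`. -/
noncomputable def lpDualityMap (p : ℝ) (x : EuclideanSpace ℝ ι) : EuclideanSpace ℝ ι :=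
  WithLp.toLp 2 fun i => |x i| ^ (p - 2) * x i

lemma lpDualityMap_zero : lpDualityMap p (0 : EuclideanSpace ℝ ι) = 0 := by
  ext i
  simp [lpDualityMap]

variable [Fintype ι]

lemma inner_lpDualityMap (x h : EuclideanSpace ℝ ι) :
    ⟪lpDualityMap p x, h⟫ = ∑ i, |x i| ^ (p - 2) * x i * h i := by
  simp [lpDualityMap, PiLp.inner_apply, mul_comm]

lemma hasGradientAt_sum_abs_rpow (hp : 1 < p) (x : EuclideanSpace ℝ ι) :
    HasGradientAt (fun z : EuclideanSpace ℝ ι => ∑ i, |z i| ^ p) (p • lpDualityMap p x) x := by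
  rw [hasGradientAt_iff_hasFDerivAt]
  have hcoord (i : ι) :
      HasFDerivAt (fun z : EuclideanSpace ℝ ι => |z i| ^ p)
        ((p * |x i| ^ (p - 2) * x i) • (EuclideanSpace.proj i : EuclideanSpace ℝ ι →L[ℝ] ℝ)) x :=
    (hasDerivAt_abs_rpow (x i) hp).comp_hasFDerivAt (h₂ := fun t : ℝ => |t| ^ p) x
      (EuclideanSpace.proj i : EuclideanSpace ℝ ι →L[ℝ] ℝ).hasFDerivAt
  refine (HasFDerivAt.fun_sum fun i _ => hcoord i).congr_fderiv ?_
  ext h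
  simp [inner_lpDualityMap, Finset.mul_sum, mul_assoc]

lemma sum_abs_rpow_nonneg (p : ℝ) (x : ι → ℝ) : 0 ≤ ∑ i, |x i| ^ p :=
  Finset.sum_nonneg fun _ _ => Real.rpow_nonneg (abs_nonneg _) _

lemma sum_abs_rpow_pos (p : ℝ) {x : ι → ℝ} (hx : x ≠ 0) : 0 < ∑ i, |x i| ^ p := by
  obtain ⟨i, hi⟩ := Function.ne_iff.1 hx
  exact Finset.sum_pos' (fun _ _ => Real.rpow_nonneg (abs_nonneg _) _)
    ⟨i, Finset.mem_univ i, Real.rpow_pos_of_pos (abs_pos.2 hi) _⟩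

lemma hasDerivAt_inner_lpDualityMap_line (hp : 2 ≤ p) (x h : EuclideanSpace ℝ ι) (t : ℝ) :
    HasDerivAt (fun s : ℝ => ⟪lpDualityMap p (x + s • h), h⟫)
      ((p - 1) * ∑ i, |(x + t • h) i| ^ (p - 2) * h i ^ 2) t := by
  simp only [inner_lpDualityMap, Finset.mul_sum]
  refine HasDerivAt.fun_sum fun i _ => ?_
  have hline : HasDerivAt (fun s : ℝ => (x + s • h) i) (h i) t := by
    simpa using ((hasDerivAt_id t).mul_const (h i)).const_add (x i)
  refine (((hasDerivAt_abs_rpow_mul_self (sub_nonneg.2 hp) _).comp t hline).mul_const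
    (h i)).congr_deriv ?_
  ring

end LpDualityMap

section LpNorm

variable {d : ℕ} {p : ℝ} (x h : EuclideanSpace ℝ (Fin d))

lemma lpNorm_nonneg : 0 ≤ lpNorm p x :=
  Real.rpow_nonneg (sum_abs_rpow_nonneg p x) _

variable {x} in
lemma lpNorm_pos (hx : x ≠ 0) : 0 < lpNorm p x :=
  Real.rpow_pos_of_pos (sum_abs_rpow_pos p (by simpa using hx)) _

lemma lpNorm_rpow (q : ℝ) : lpNorm p x ^ q = (∑ i, |x i| ^ p) ^ (q / p) := by
  rw [lpNorm, ← Real.rpow_mul (sum_abs_rpow_nonneg p x), one_div_mul_eq_div]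

lemma lpNorm_smul (hp : p ≠ 0) (c : ℝ) : lpNorm p (c • x) = |c| * lpNorm p x := by
  have hsum : ∑ i, |(c • x) i| ^ p = |c| ^ p * ∑ i, |x i| ^ p := by
    simp only [PiLp.smul_apply, smul_eq_mul, abs_mul,
      Real.mul_rpow (abs_nonneg _) (abs_nonneg _), Finset.mul_sum]
  rw [lpNorm, lpNorm, hsum, Real.mul_rpow (by positivity) (sum_abs_rpow_nonneg p x), one_div,
    Real.rpow_rpow_inv (abs_nonneg c) hp]

lemma lpNorm_le_norm (hp : 2 ≤ p) : lpNorm p x ≤ ‖x‖ := by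
  have hp0 : 0 < p := by linarith
  have hp2 : 0 ≤ p - 2 := sub_nonneg.2 hp
  have hsplit {t : ℝ} (ht : 0 ≤ t) : t ^ p = t ^ (p - 2) * t ^ 2 := by
    rw [← Real.rpow_two, ← Real.rpow_add_of_nonneg ht hp2 zero_le_two, sub_add_cancel]
  rw [← Real.rpow_le_rpow_iff (lpNorm_nonneg x) (norm_nonneg x) hp0, lpNorm_rpow,
    div_self hp0.ne', Real.rpow_one]
  calc ∑ i, |x i| ^ p = ∑ i, |x i| ^ (p - 2) * |x i| ^ 2 := by
        simp only [hsplit (abs_nonneg _)]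
    _ ≤ ∑ i, ‖x‖ ^ (p - 2) * |x i| ^ 2 := by
        gcongr with i
        exact PiLp.norm_apply_le x i
    _ = ‖x‖ ^ p := by
        simp only [sq_abs, ← Finset.mul_sum, ← EuclideanSpace.real_norm_sq_eq,
          ← hsplit (norm_nonneg x)]

lemma sum_abs_rpow_mul_sq_le (hp : 2 ≤ p) :
    ∑ i, |x i| ^ (p - 2) * h i ^ 2 ≤ lpNorm p x ^ (p - 2) * lpNorm p h ^ 2 := by
  rw [← Real.rpow_two, lpNorm_rpow, lpNorm_rpow]
  rcases hp.eq_or_lt with rfl | hp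
  · simp
  have hp2 : 0 < p - 2 := sub_pos.2 hp
  have hconj : (p / (p - 2)).HolderConjugate (p / 2) :=
    Real.holderConjugate_iff.2 ⟨(one_lt_div hp2).2 (by linarith), by field_simp; ring⟩
  have hholder := Real.inner_le_Lp_mul_Lq_of_nonneg univ hconj
    (f := fun i => |x i| ^ (p - 2)) (g := fun i => |h i| ^ (2 : ℝ))
    (fun _ _ => by positivity) (fun _ _ => by positivity)
  simp only [← Real.rpow_mul (abs_nonneg _), mul_div_cancel₀ p hp2.ne',
    mul_div_cancel₀ p two_ne_zero, one_div_div] at hholder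
  simpa only [Real.rpow_two, sq_abs] using hholder

variable {x} in
lemma lpNorm_rpow_mul_sum_abs_rpow_mul_sq_le (hp : 2 ≤ p) (hx : x ≠ 0) :
    lpNorm p x ^ (2 - p) * ∑ i, |x i| ^ (p - 2) * h i ^ 2 ≤ lpNorm p h ^ 2 := by
  have hN : 0 < lpNorm p x := lpNorm_pos hx
  calc lpNorm p x ^ (2 - p) * ∑ i, |x i| ^ (p - 2) * h i ^ 2
      ≤ lpNorm p x ^ (2 - p) * (lpNorm p x ^ (p - 2) * lpNorm p h ^ 2) := by
        gcongr
        exact sum_abs_rpow_mul_sq_le x h hp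
    _ = lpNorm p h ^ 2 := by
        rw [← mul_assoc, ← Real.rpow_add hN, sub_add_sub_cancel, sub_self, Real.rpow_zero,
          one_mul]

variable {x} in
lemma hasGradientAt_lpNorm (hp : 1 < p) (hx : x ≠ 0) :
    HasGradientAt (lpNorm p) (lpNorm p x ^ (1 - p) • lpDualityMap p x) x := by
  have hp0 : p ≠ 0 := by linarith
  rw [hasGradientAt_iff_hasFDerivAt]
  refine ((hasGradientAt_sum_abs_rpow hp x).hasFDerivAt.rpow_const (p := 1 / p)
    (.inl (sum_abs_rpow_pos p (by simpa using hx)).ne')).congr_fderiv ?_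
  have hexp : (1 - p) / p = 1 / p - 1 := by field_simp
  rw [lpNorm_rpow, hexp, map_smul, map_smul, smul_smul, mul_right_comm, one_div_mul_cancel hp0,
    one_mul]

lemma hasGradientAt_half_sq_lpNorm (hp : 2 ≤ p) :
    HasGradientAt (fun z => (1 / 2) * lpNorm p z ^ 2)
      (lpNorm p x ^ (2 - p) • lpDualityMap p x) x := by
  rw [hasGradientAt_iff_hasFDerivAt]
  rcases eq_or_ne x 0 with rfl | hx
  · -- At the origin `‖·‖ₚ²` vanishes to second order, being at most `‖·‖₂²`.
    have hO : (fun z : EuclideanSpace ℝ (Fin d) => (1 / 2) * lpNorm p z ^ 2) =O[nhds 0]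
        fun z => ‖z - 0‖ ^ 2 := by
      refine .of_bound (1 / 2) (.of_forall fun z => ?_)
      rw [sub_zero, Real.norm_of_nonneg (by positivity), Real.norm_of_nonneg (by positivity)]
      have := lpNorm_nonneg (p := p) z
      gcongr
      exact lpNorm_le_norm z hp
    simpa [lpDualityMap_zero] using hO.hasFDerivAt one_lt_two
  · refine (((hasGradientAt_lpNorm (by linarith) hx).hasFDerivAt.pow 2).const_mul
      (1 / 2)).congr_fderiv ?_
    have hpow : lpNorm p x ^ (2 - p) = lpNorm p x * lpNorm p x ^ (1 - p) := by
      rw [mul_comm, ← Real.rpow_add_one (lpNorm_pos hx).ne', sub_add_eq_add_sub,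
        one_add_one_eq_two]
    rw [hpow, map_smul, map_smul, smul_smul, smul_smul]
    congr 1
    simp

lemma hasDerivAt_inner_gradient_half_sq_lpNorm_line_of_ne_zero (hp : 2 ≤ p) {t : ℝ}
    (ht : x + t • h ≠ 0) :
    HasDerivAt
      (fun s : ℝ => ⟪lpNorm p (x + s • h) ^ (2 - p) • lpDualityMap p (x + s • h), h⟫)
      ((2 - p) * (lpNorm p (x + t • h) ^ (1 - p) * ⟪lpDualityMap p (x + t • h), h⟫) ^ 2 +
        (p - 1) * (lpNorm p (x + t • h) ^ (2 - p) *
          ∑ i, |(x + t • h) i| ^ (p - 2) * h i ^ 2)) t := by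
  have hnorm : HasDerivAt (fun s : ℝ => lpNorm p (x + s • h))
      (lpNorm p (x + t • h) ^ (1 - p) * ⟪lpDualityMap p (x + t • h), h⟫) t := by
    simpa only [real_inner_smul_left] using
      hasDerivAt_line_of_hasGradientAt (hasGradientAt_lpNorm (by linarith) ht)
  simp only [real_inner_smul_left]
  refine ((hnorm.rpow_const (p := 2 - p) (.inl (lpNorm_pos ht).ne')).mul
    (hasDerivAt_inner_lpDualityMap_line hp x h t)).congr_deriv ?_
  rw [show 2 - p - 1 = 1 - p by ring]
  ring

lemma hasDerivAt_inner_gradient_half_sq_lpNorm_line_of_eq_zero (hp : 2 ≤ p) {t : ℝ}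
    (ht : x + t • h = 0) :
    HasDerivAt
      (fun s : ℝ => ⟪lpNorm p (x + s • h) ^ (2 - p) • lpDualityMap p (x + s • h), h⟫)
      (lpNorm p h ^ 2) t := by
  have hline (s : ℝ) : x + s • h = (s - t) • h := by
    rw [eq_neg_of_add_eq_zero_left ht, sub_smul, neg_add_eq_sub]
  have hquadratic :
      (fun s : ℝ => (1 / 2) * lpNorm p (x + s • h) ^ 2) =
        fun s => (1 / 2) * lpNorm p h ^ 2 * (s - t) ^ 2 := by
    ext s
    rw [hline, lpNorm_smul h (by linarith), mul_pow, sq_abs]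
    ring
  have hlinear :
      (fun s : ℝ => ⟪lpNorm p (x + s • h) ^ (2 - p) • lpDualityMap p (x + s • h), h⟫) =
        fun s => lpNorm p h ^ 2 * (s - t) := by
    ext s
    have hderiv := hasDerivAt_line_of_hasGradientAt (hasGradientAt_half_sq_lpNorm (x + s • h) hp)
    rw [hquadratic] at hderiv
    refine hderiv.unique (((((hasDerivAt_id s).sub_const t).pow 2).const_mul _).congr_deriv ?_)
    simp only [id_eq, Nat.cast_ofNat]
    ring
  rw [hlinear]
  simpa using ((hasDerivAt_id t).sub_const t).const_mul (lpNorm p h ^ 2)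

lemma exists_le_hasDerivAt_inner_gradient_half_sq_lpNorm_line (hp : 2 ≤ p) (t : ℝ) :
    ∃ D ≤ (p - 1) * lpNorm p h ^ 2, HasDerivAt
      (fun s : ℝ => ⟪lpNorm p (x + s • h) ^ (2 - p) • lpDualityMap p (x + s • h), h⟫) D t := by
  rcases eq_or_ne (x + t • h) 0 with ht | ht
  · exact ⟨lpNorm p h ^ 2, le_mul_of_one_le_left (sq_nonneg _) (by linarith),
      hasDerivAt_inner_gradient_half_sq_lpNorm_line_of_eq_zero x h hp ht⟩
  · refine ⟨_, ?_, hasDerivAt_inner_gradient_half_sq_lpNorm_line_of_ne_zero x h hp ht⟩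
    have hradial : (2 - p) *
        (lpNorm p (x + t • h) ^ (1 - p) * ⟪lpDualityMap p (x + t • h), h⟫) ^ 2 ≤ 0 :=
      mul_nonpos_of_nonpos_of_nonneg (by linarith) (sq_nonneg _)
    have hangular := mul_le_mul_of_nonneg_left (lpNorm_rpow_mul_sum_abs_rpow_mul_sq_le h hp ht)
      (by linarith : 0 ≤ p - 1)
    linarith

end LpNorm

theorem half_sq_lp_norm_smooth_general {d : ℕ} {p : ℝ} (hp : 2 ≤ p)
    (x y : EuclideanSpace ℝ (Fin d)) :
    (1 / 2) * lpNorm p y ^ 2 ≤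
      (1 / 2) * lpNorm p x ^ 2
        + ⟪gradient (fun z => (1 / 2) * lpNorm p z ^ 2) x, y - x⟫
        + (p - 1) / 2 * lpNorm p (y - x) ^ 2 := by
  choose D hD_le hD using exists_le_hasDerivAt_inner_gradient_half_sq_lpNorm_line x (y - x) hp
  have htaylor := le_taylor_two_of_hasDerivAt2_le one_pos
    (fun t => hasDerivAt_line_of_hasGradientAt
      (hasGradientAt_half_sq_lpNorm (x + t • (y - x)) hp)) hD hD_le
  rw [(hasGradientAt_half_sq_lpNorm x hp).gradient]
  simpa [mul_div_right_comm] using htaylor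

/-- For `p ≥ 2`, the function `φ(x) = ½‖x‖ₚ²` is smooth: there is a constant `C ≥ 0`
such that `φ(y) ≤ φ(x) + ⟨∇φ(x), y − x⟩ + C‖y − x‖₂²` for all `x, y`. -/
theorem half_sq_lp_norm_smooth {d : ℕ} (p : ℝ) (hp : 2 ≤ p) :
    ∃ C ≥ (0 : ℝ), ∀ x y : EuclideanSpace ℝ (Fin d),
      (1 / 2) * lpNorm p y ^ 2 ≤
        (1 / 2) * lpNorm p x ^ 2
          + ⟪gradient (fun z => (1 / 2) * lpNorm p z ^ 2) x, y - x⟫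
          + C * ‖y - x‖ ^ 2 := by
  refine ⟨(p - 1) / 2, by linarith, fun x y => (half_sq_lp_norm_smooth_general hp x y).trans ?_⟩
  gcongr
  exacts [by linarith, lpNorm_nonneg _, lpNorm_le_norm _ hp]
end

section
/- Let S be a nonempty finite state space, P_π an irreducible aperiodic row-stochastic transition matrix on S with stationary distribution d_π, D_π the diagonal matrix with diagonal d_π, X ∈ ℝ^{|S|×K} a feature matrix with full column rank, and γ ∈ [0,1) a discount factor. Then the matrix A := Xᵀ D_π (γP_π − I) X is negative definite: there exists η > 0 such that ⟨w, A w⟩ ≤ −η‖w‖₂² for all w ∈ ℝᴷ. -/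
/-!
Write `y = X w`. The quadratic form of `A` at `w` is `γ ∑ᵢⱼ dᵢ Pᵢⱼ yᵢ yⱼ - ∑ᵢ dᵢ yᵢ²`. By
`|yᵢ yⱼ| ≤ (yᵢ² + yⱼ²) / 2`, the row sums of `P` and the stationarity of `d` bound the double sum
by `∑ᵢ dᵢ yᵢ²`, so the form is at most `-(1 - |γ|) ∑ᵢ dᵢ yᵢ²`. Irreducibility makes `d` strictly
positive, and `X` has a left inverse `Y`, so the weighted Cauchy-Schwarz inequality for `w = Y y`
bounds `w ⬝ᵥ w` by a multiple of `∑ᵢ dᵢ yᵢ²`.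
-/

open Finset Matrix

section Excessive

variable {R S : Type*} [Fintype S] [DecidableEq S]

lemma vecMul_pow_le_of_vecMul_le [Semiring R] [PartialOrder R] [IsOrderedRing R]
    {A : Matrix S S R} {d : S → R} (hA : ∀ i j, 0 ≤ A i j) (hdA : d ᵥ* A ≤ d) (n : ℕ) :
    d ᵥ* A ^ n ≤ d := by
  induction n with
  | zero => simp
  | succ n ih =>
    rw [pow_succ, ← vecMul_vecMul]
    exact le_trans (fun j => dotProduct_le_dotProduct_of_nonneg_right ih fun i => hA i j) hdA

lemma pos_of_vecMul_le_of_exists_pow_pos [Semiring R] [PartialOrder R] [IsStrictOrderedRing R]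
    {A : Matrix S S R} {d : S → R} (hA : ∀ i j, 0 ≤ A i j) (hirr : ∀ i j, ∃ n : ℕ, 0 < (A ^ n) i j)
    (hd : 0 < d) (hdA : d ᵥ* A ≤ d) (j : S) : 0 < d j := by
  obtain ⟨hd_nonneg, i, hi⟩ := Pi.lt_def.mp hd
  obtain ⟨n, hn⟩ := hirr i j
  calc 0 < d i * (A ^ n) i j := mul_pos hi hn
    _ ≤ (d ᵥ* A ^ n) j :=
      single_le_sum (f := fun k => d k * (A ^ n) k j)
        (fun k _ => mul_nonneg (hd_nonneg k) (pow_apply_nonneg hA n k j)) (mem_univ i)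
    _ ≤ d j := vecMul_pow_le_of_vecMul_le hA hdA n j

end Excessive

lemma exists_mul_eq_one_of_mulVec_injective {F m n : Type*} [Field F] [Fintype m] [Fintype n]
    [DecidableEq n] {X : Matrix m n F} (hX : Function.Injective X.mulVec) :
    ∃ Y : Matrix n m F, Y * X = 1 := by
  classical
  have hker : X.toLin'.ker = ⊥ := LinearMap.ker_eq_bot.mpr hX
  obtain ⟨g, hg⟩ := X.toLin'.exists_leftInverse_of_injective hker
  refine ⟨g.toMatrix', ?_⟩
  calc g.toMatrix' * X = (g ∘ₗ X.toLin').toMatrix' := by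
        rw [LinearMap.toMatrix'_comp, LinearMap.toMatrix'_toLin']
    _ = 1 := by rw [hg, LinearMap.toMatrix'_id]

section QuadraticForm

variable {R S ι : Type*} [CommSemiring R] [Fintype S]

lemma dotProduct_transpose_mul_mul_mulVec [Fintype ι] (X : Matrix S ι R) (M : Matrix S S R)
    (v w : ι → R) : v ⬝ᵥ (Xᵀ * M * X) *ᵥ w = (X *ᵥ v) ⬝ᵥ M *ᵥ (X *ᵥ w) := by
  rw [← mulVec_mulVec, ← mulVec_mulVec, dotProduct_mulVec, vecMul_transpose]

lemma dotProduct_diagonal_mulVec_self [DecidableEq S] (d y : S → R) :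
    y ⬝ᵥ diagonal d *ᵥ y = ∑ s, d s * y s ^ 2 :=
  sum_congr rfl fun s _ => by rw [mulVec_diagonal]; ring

end QuadraticForm

section OrderedField

variable {R S ι : Type*} [Field R] [LinearOrder R] [IsStrictOrderedRing R] [Fintype S] [Fintype ι]

lemma abs_dotProduct_mulVec_le {A : Matrix S ι R} (hA : ∀ i j, 0 ≤ A i j) (x : S → R) (y : ι → R) :
    |x ⬝ᵥ A *ᵥ y| ≤ (∑ i, (∑ j, A i j) * x i ^ 2 + ∑ j, (∑ i, A i j) * y j ^ 2) / 2 := by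
  have hentry (i j) : |x i * (A i j * y j)| ≤ (A i j * x i ^ 2 + A i j * y j ^ 2) / 2 := by
    rw [abs_mul, abs_mul, abs_of_nonneg (hA i j), ← sq_abs (x i), ← sq_abs (y j)]
    linarith [mul_le_mul_of_nonneg_left (two_mul_le_add_sq |x i| |y j|) (hA i j)]
  calc |x ⬝ᵥ A *ᵥ y| = |∑ i, ∑ j, x i * (A i j * y j)| := by
        simp only [mulVec, dotProduct, mul_sum]
    _ ≤ ∑ i, ∑ j, |x i * (A i j * y j)| :=
        (abs_sum_le_sum_abs _ _).trans (sum_le_sum fun i _ => abs_sum_le_sum_abs _ _)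
    _ ≤ ∑ i, ∑ j, (A i j * x i ^ 2 + A i j * y j ^ 2) / 2 :=
        sum_le_sum fun i _ => sum_le_sum fun j _ => hentry i j
    _ = (∑ i, (∑ j, A i j) * x i ^ 2 + ∑ j, (∑ i, A i j) * y j ^ 2) / 2 := by
        simp only [← sum_div, sum_add_distrib, sum_mul]
        rw [sum_comm (f := fun i j => A i j * y j ^ 2)]

lemma abs_dotProduct_diagonal_mul_mulVec_le [DecidableEq S] {P : Matrix S S R} {d : S → R}
    (hP : ∀ i j, 0 ≤ P i j) (hrow : ∀ i, ∑ j, P i j ≤ 1) (hd : 0 ≤ d) (hdP : d ᵥ* P ≤ d)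
    (y : S → R) : |y ⬝ᵥ (diagonal d * P) *ᵥ y| ≤ ∑ s, d s * y s ^ 2 := by
  have hrow_sum (i) : ∑ j, (diagonal d * P) i j ≤ d i := by
    simpa only [diagonal_mul, ← mul_sum] using mul_le_of_le_one_right (hd i) (hrow i)
  have hcol_sum (j) : ∑ i, (diagonal d * P) i j ≤ d j := by
    simp only [diagonal_mul]
    exact hdP j
  have hnonneg (i j) : 0 ≤ (diagonal d * P) i j := by
    simpa only [diagonal_mul] using mul_nonneg (hd i) (hP i j)
  calc |y ⬝ᵥ (diagonal d * P) *ᵥ y|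
    _ ≤ _ := abs_dotProduct_mulVec_le hnonneg y y
    _ ≤ (∑ s, d s * y s ^ 2 + ∑ s, d s * y s ^ 2) / 2 := by
        gcongr with i _ j _
        exacts [hrow_sum i, hcol_sum j]
    _ = ∑ s, d s * y s ^ 2 := add_self_div_two _

lemma dotProduct_diagonal_mul_smul_sub_one_mulVec_le [DecidableEq S] {P : Matrix S S R}
    {d : S → R} (hP : ∀ i j, 0 ≤ P i j) (hrow : ∀ i, ∑ j, P i j ≤ 1) (hd : 0 ≤ d)
    (hdP : d ᵥ* P ≤ d) (γ : R) (y : S → R) :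
    y ⬝ᵥ (diagonal d * (γ • P - 1)) *ᵥ y ≤ -(1 - |γ|) * ∑ s, d s * y s ^ 2 := by
  calc y ⬝ᵥ (diagonal d * (γ • P - 1)) *ᵥ y
    _ = γ * (y ⬝ᵥ (diagonal d * P) *ᵥ y) - ∑ s, d s * y s ^ 2 := by
        rw [Matrix.mul_sub, Matrix.mul_smul, Matrix.mul_one, sub_mulVec, smul_mulVec,
          dotProduct_sub, dotProduct_smul, smul_eq_mul, dotProduct_diagonal_mulVec_self]
    _ ≤ |γ| * |y ⬝ᵥ (diagonal d * P) *ᵥ y| - ∑ s, d s * y s ^ 2 := by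
        rw [← abs_mul]
        gcongr
        exact le_abs_self _
    _ ≤ |γ| * ∑ s, d s * y s ^ 2 - ∑ s, d s * y s ^ 2 := by
        gcongr
        exact abs_dotProduct_diagonal_mul_mulVec_le hP hrow hd hdP y
    _ = -(1 - |γ|) * ∑ s, d s * y s ^ 2 := by ring

lemma dotProduct_mulVec_self_le {d : S → R} (hd : ∀ s, 0 < d s) (Y : Matrix ι S R) (y : S → R) :
    (Y *ᵥ y) ⬝ᵥ (Y *ᵥ y) ≤ (∑ k, ∑ s, Y k s ^ 2 / d s) * ∑ s, d s * y s ^ 2 := by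
  rw [sum_mul]
  refine sum_le_sum fun k _ => ?_
  rw [← sq]
  refine sum_sq_le_sum_mul_sum_of_sq_le_mul _ (fun s _ => div_nonneg (sq_nonneg _) (hd s).le)
    (fun s _ => mul_nonneg (hd s).le (sq_nonneg _)) fun s _ => le_of_eq ?_
  have := (hd s).ne'
  field_simp

lemma exists_pos_mul_dotProduct_self_le_of_mulVec_injective {d : S → R} (hd : ∀ s, 0 < d s)
    {X : Matrix S ι R} (hX : Function.Injective X.mulVec) :
    ∃ η > 0, ∀ w : ι → R, η * (w ⬝ᵥ w) ≤ ∑ s, d s * (X *ᵥ w) s ^ 2 := by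
  classical
  obtain ⟨Y, hYX⟩ := exists_mul_eq_one_of_mulVec_injective hX
  set c := ∑ k, ∑ s, Y k s ^ 2 / d s
  have hc : 0 ≤ c := sum_nonneg fun k _ => sum_nonneg fun s _ => div_nonneg (sq_nonneg _) (hd s).le
  -- `c` vanishes when `ι` is empty.
  have hc1 : 0 < c + 1 := by positivity
  refine ⟨(c + 1)⁻¹, inv_pos.mpr hc1, fun w => (inv_mul_le_iff₀ hc1).mpr ?_⟩
  have hw : Y *ᵥ (X *ᵥ w) = w := by rw [mulVec_mulVec, hYX, one_mulVec]
  have hnorm_nonneg : 0 ≤ ∑ s, d s * (X *ᵥ w) s ^ 2 :=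
    sum_nonneg fun s _ => mul_nonneg (hd s).le (sq_nonneg _)
  calc w ⬝ᵥ w ≤ c * ∑ s, d s * (X *ᵥ w) s ^ 2 := by
        simpa only [hw] using dotProduct_mulVec_self_le hd Y (X *ᵥ w)
    _ ≤ (c + 1) * ∑ s, d s * (X *ᵥ w) s ^ 2 := by
        gcongr
        exact le_add_of_nonneg_right zero_le_one

theorem td_matrix_negative_definite_general [DecidableEq S] {P : Matrix S S R}
    (hP : ∀ i j, 0 ≤ P i j) (hrow : ∀ i, ∑ j, P i j ≤ 1) {d : S → R} (hd : ∀ s, 0 < d s)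
    (hdP : d ᵥ* P ≤ d) {X : Matrix S ι R} (hX : Function.Injective X.mulVec) {γ : R}
    (hγ : |γ| < 1) :
    ∃ η > 0, ∀ w : ι → R,
      w ⬝ᵥ (Xᵀ * diagonal d * (γ • P - 1) * X) *ᵥ w ≤ -η * (w ⬝ᵥ w) := by
  obtain ⟨η, hη, hXη⟩ := exists_pos_mul_dotProduct_self_le_of_mulVec_injective hd hX
  refine ⟨(1 - |γ|) * η, mul_pos (sub_pos.mpr hγ) hη, fun w => ?_⟩
  rw [Matrix.mul_assoc Xᵀ, dotProduct_transpose_mul_mul_mulVec]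
  calc (X *ᵥ w) ⬝ᵥ (diagonal d * (γ • P - 1)) *ᵥ (X *ᵥ w)
    _ ≤ -(1 - |γ|) * ∑ s, d s * (X *ᵥ w) s ^ 2 :=
        dotProduct_diagonal_mul_smul_sub_one_mulVec_le hP hrow (fun s => (hd s).le) hdP γ _
    _ ≤ -(1 - |γ|) * (η * (w ⬝ᵥ w)) :=
        mul_le_mul_of_nonpos_left (hXη w) (neg_nonpos.mpr (sub_nonneg.mpr hγ.le))
    _ = -((1 - |γ|) * η) * (w ⬝ᵥ w) := by ring

end OrderedField

/-- The linear TD matrix `A = Xᵀ D_π (γ P_π − I) X` is negative definite, where `P_π`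
is irreducible and aperiodic with stationary distribution `d_π`, `X` has full column
rank and `γ ∈ [0, 1)`. -/
theorem td_matrix_negative_definite
    {S : Type*} [Fintype S] [Nonempty S] [DecidableEq S] {K : ℕ}
    (P : Matrix S S ℝ)
    (hnonneg : ∀ i j, 0 ≤ P i j)
    (hrowsum : ∀ i, ∑ j, P i j = 1)
    (hirr : ∀ i j, ∃ n : ℕ, 0 < (P ^ n) i j)
    (haper : ∀ i, ∀ e : ℕ, (∀ n ∈ returnTimes P i, e ∣ n) → e = 1)
    (d : S → ℝ) (hdnonneg : ∀ s, 0 ≤ d s) (hdsum : ∑ s, d s = 1)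
    (hdstat : ∀ j, ∑ i, d i * P i j = d j)
    (X : Matrix S (Fin K) ℝ) (hX : Function.Injective X.mulVec)
    (γ : ℝ) (hγ0 : 0 ≤ γ) (hγ1 : γ < 1) :
    ∃ η > (0 : ℝ), ∀ w : Fin K → ℝ,
      w ⬝ᵥ (Xᵀ * Matrix.diagonal d * (γ • P - 1) * X).mulVec w ≤ -η * (w ⬝ᵥ w) := by
  have hdP : d ᵥ* P ≤ d := fun j => (hdstat j).le
  have hd : 0 < d := lt_of_le_of_ne hdnonneg (by rintro rfl; simp at hdsum)
  exact td_matrix_negative_definite_general hnonneg (fun i => (hrowsum i).le)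
    (pos_of_vecMul_le_of_exists_pow_pos hnonneg hirr hd hdP) hdP hX
    ((abs_of_nonneg hγ0).trans_lt hγ1)
end

section
/- (Almost sure convergence of linear TD with Markovian samples.) Let {S_t} be a time-homogeneous Markov chain on a nonempty finite state space S with irreducible and aperiodic transition matrix P_π, with the trajectory probability measure on (S × S)^ℕ constructed via the Ionescu–Tulcea theorem from the augmented chain Y_t = (S_t, S_{t+1}). Let X be a feature matrix with full column rank, r_π : S → ℝ a reward vector, γ ∈ [0,1), and step sizes α_t = 1/(t+2)^ν with ν ∈ (2/3, 1). Let the linear TD iterates be w_0 given and w_{t+1} = w_t + α_t·(r_π(S_t) + γ·⟨x(S_{t+1}), w_t⟩ − ⟨x(S_t), w_t⟩)·x(S_t). Then, almost surely with respect to the trajectory measure, w_t → w* := −A⁻¹b, where A = Xᵀ D_π (γP_π − I) X and b = Xᵀ D_π r_π, with D_π = diag(d_π) and d_π the stationary distribution of P_π. -/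
/-!
The recursion is `w_{t+1} = w_t + α_t (A_t w_t + b_t)`, with `A_t` and `b_t` functions of the
transition `(S_t, S_{t+1})` whose stationary means are `A` and `b`. Stationarity of `d` and
`2 |v_i v_j| ≤ v_i² + v_j²` make `A` negative definite, so the averaged recursion is a contraction
toward `w*`, and it remains to control the fluctuations.

The Poisson equation of the irreducible chain splits a function of the transition with stationary
mean zero into a function whose conditional mean given the past is zero and a difference
`g (S_t) - g (S_{t+1})`. Weighted by `α_t`, the first part sums to an `L²`-bounded martingale and
the second converges by Abel summation, so `∑ α_t (A_t - A)` and `∑ α_t (A_t w* + b_t)` converge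
almost surely. With `M_t` and `N_t` their tails and `z_t = w_t - w*`, the corrected error
`z_t + M_t z_t + N_t` follows the averaged recursion up to a perturbation of lower order.
-/

open Finset Matrix MeasureTheory Filter

/-! ### Linear recursions with vanishing step sizes -/

section LinearRecursion

open Asymptotics
open scoped Topology RealInnerProductSpace

theorem tendsto_prod_one_sub_nhds_zero {β : ℕ → ℝ} {N : ℕ} (hβ : ∀ n ≥ N, β n ≤ 1)
    (hsum : Tendsto (fun n => ∑ t ∈ range n, β t) atTop atTop) :
    Tendsto (fun n => ∏ t ∈ Ico N n, (1 - β t)) atTop (𝓝 0) := by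
  have hexp : Tendsto (fun n => Real.exp (-(∑ t ∈ range n, β t - ∑ t ∈ range N, β t)))
      atTop (𝓝 0) :=
    Real.tendsto_exp_neg_atTop_nhds_zero.comp (tendsto_atTop_add_const_right _ _ hsum)
  refine squeeze_zero' (Eventually.of_forall fun n => prod_nonneg fun t ht =>
    sub_nonneg.2 (hβ t (mem_Ico.1 ht).1)) ?_ hexp
  filter_upwards [eventually_ge_atTop N] with n hn
  rw [← sum_Ico_eq_sub _ hn, ← sum_neg_distrib, Real.exp_sum]
  exact prod_le_prod (fun t ht => sub_nonneg.2 (hβ t (mem_Ico.1 ht).1))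
    fun t _ => Real.one_sub_le_exp_neg _

theorem tendsto_nhds_zero_of_le_one_sub_mul_add {a β : ℕ → ℝ} (ha : ∀ t, 0 ≤ a t)
    (hβ : ∀ᶠ t in atTop, β t ≤ 1) (hsum : Tendsto (fun n => ∑ t ∈ range n, β t) atTop atTop)
    (hrec : ∀ ε > 0, ∀ᶠ t in atTop, a (t + 1) ≤ (1 - β t) * a t + β t * ε) :
    Tendsto a atTop (𝓝 0) := by
  refine tendsto_order.2 ⟨fun b hb => Eventually.of_forall fun t => hb.trans_le (ha t),
    fun b hb => ?_⟩
  obtain ⟨N, hN⟩ := eventually_atTop.1 (hβ.and (hrec (b / 2) (half_pos hb)))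
  have hexcess : ∀ n ≥ N, a n - b / 2 ≤ (a N - b / 2) * ∏ t ∈ Ico N n, (1 - β t) := by
    intro n hn
    have := discrete_gronwall_prod_general (u := fun t => a t - b / 2) (b := 0)
      (fun t ht => by simp only [Pi.zero_apply]; linarith [(hN t ht).2])
      (fun t ht => sub_nonneg.2 (hN t ht).1) hn
    simpa using this
  have hlim : Tendsto (fun n => (a N - b / 2) * ∏ t ∈ Ico N n, (1 - β t)) atTop (𝓝 0) := by
    simpa using (tendsto_prod_one_sub_nhds_zero (fun t ht => (hN t ht).1) hsum).const_mul
      (a N - b / 2)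
  filter_upwards [eventually_ge_atTop N, hlim.eventually_lt_const (half_pos hb)] with n hn hsmall
  linarith [hexcess n hn]

variable {E : Type*} [NormedAddCommGroup E] [InnerProductSpace ℝ E] {A : E →L[ℝ] E} {c : ℝ}

theorem norm_add_smul_le_of_inner_le (hA : ∀ u, ⟪u, A u⟫ ≤ -c * ‖u‖ ^ 2) {s : ℝ} (hs : 0 ≤ s)
    (hsc : c * s ≤ 1) (hsA : ‖A‖ ^ 2 * s ≤ c) (u : E) :
    ‖u + s • A u‖ ≤ (1 - c / 2 * s) * ‖u‖ := by
  have hAu : ‖A u‖ ^ 2 ≤ ‖A‖ ^ 2 * ‖u‖ ^ 2 := by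
    rw [← mul_pow]
    gcongr
    exact A.le_opNorm u
  refine le_of_sq_le_sq ?_ (mul_nonneg (by linarith) (norm_nonneg u))
  calc ‖u + s • A u‖ ^ 2 = ‖u‖ ^ 2 + 2 * s * ⟪u, A u⟫ + s ^ 2 * ‖A u‖ ^ 2 := by
        rw [norm_add_sq_real, real_inner_smul_right, norm_smul, mul_pow, Real.norm_eq_abs, sq_abs]
        ring
    _ ≤ ‖u‖ ^ 2 + 2 * s * (-c * ‖u‖ ^ 2) + s ^ 2 * (‖A‖ ^ 2 * ‖u‖ ^ 2) := by
        gcongr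
        exact hA u
    _ = ‖u‖ ^ 2 - 2 * c * s * ‖u‖ ^ 2 + ‖A‖ ^ 2 * s * (s * ‖u‖ ^ 2) := by ring
    _ ≤ ‖u‖ ^ 2 - 2 * c * s * ‖u‖ ^ 2 + c * (s * ‖u‖ ^ 2) := by gcongr
    _ ≤ ((1 - c / 2 * s) * ‖u‖) ^ 2 := by linarith [sq_nonneg (c * s * ‖u‖)]

theorem isLittleO_clm_apply {ι : Type*} {l : Filter ι} {B : ι → E →L[ℝ] E} {x : ι → E}
    {g : ι → ℝ} (hB : B =o[l] (1 : ι → ℝ)) (hx : x =O[l] g) : (fun t => B t (x t)) =o[l] g :=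
  (isBoundedBilinearMap_apply.isBigO_comp (g := B) (h := x)).trans_isLittleO <| by
    simpa using hB.norm_left.mul_isBigO hx.norm_left

theorem isBigO_one_add_norm_add_clm_apply_add {ι : Type*} {l : Filter ι} {M : ι → E →L[ℝ] E}
    {N z : ι → E} (hM : M =o[l] (1 : ι → ℝ)) (hN : N =o[l] (1 : ι → ℝ)) :
    z =O[l] fun t => 1 + ‖z t + M t (z t) + N t‖ := by
  refine IsBigO.of_bound 2 ?_
  filter_upwards [hM.bound (by norm_num : (0 : ℝ) < 1 / 2), hN.bound one_pos] with t hMt hNt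
  have hMz : ‖M t (z t)‖ ≤ 1 / 2 * ‖z t‖ := (M t).le_of_opNorm_le (by simpa using hMt) (z t)
  have hz : ‖z t‖ ≤ ‖z t + M t (z t) + N t‖ + ‖M t (z t)‖ + ‖N t‖ := by
    calc ‖z t‖ = ‖z t + M t (z t) + N t - N t - M t (z t)‖ := by congr 1; abel
      _ ≤ _ := by
        have := norm_sub_le (z t + M t (z t) + N t - N t) (M t (z t))
        have := norm_sub_le (z t + M t (z t) + N t) (N t)
        linarith
  rw [Real.norm_of_nonneg (by positivity : 0 ≤ 1 + ‖z t + M t (z t) + N t‖)]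
  simp only [Pi.one_apply, norm_one, mul_one] at hNt
  linarith

variable {α : ℕ → ℝ} (hc : 0 < c) (hA : ∀ u, ⟪u, A u⟫ ≤ -c * ‖u‖ ^ 2) (hα0 : ∀ t, 0 ≤ α t)
  (hαlim : Tendsto α atTop (𝓝 0)) (hαsum : Tendsto (fun n => ∑ t ∈ range n, α t) atTop atTop)
include hc hA hα0 hαlim hαsum

theorem tendsto_nhds_zero_of_linear_recursion_add_isLittleO {u η : ℕ → E}
    (hu : ∀ t, u (t + 1) = u t + α t • (A (u t) + η t))
    (hη : η =o[atTop] fun t => 1 + ‖u t‖) : Tendsto u atTop (𝓝 0) := by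
  have hsmall : ∀ C δ : ℝ, 0 < δ → ∀ᶠ t in atTop, C * α t ≤ δ := fun C δ hδ =>
    (hαlim.const_mul C).eventually_le_const (by simpa using hδ)
  have hβsum : Tendsto (fun n => ∑ t ∈ range n, c / 4 * α t) atTop atTop := by
    simpa only [mul_sum] using hαsum.const_mul_atTop (by positivity : 0 < c / 4)
  refine tendsto_zero_iff_norm_tendsto_zero.2 <| tendsto_nhds_zero_of_le_one_sub_mul_add
    (fun _ => norm_nonneg _) (hsmall (c / 4) 1 one_pos) hβsum fun ε hε => ?_
  filter_upwards [hsmall c 1 one_pos, hsmall (‖A‖ ^ 2) c hc,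
    hη.bound (by positivity : 0 < c / 4 * min 1 ε)] with t hαc hαA hηt
  rw [Real.norm_of_nonneg (by positivity : 0 ≤ 1 + ‖u t‖)] at hηt
  have hη' : ‖η t‖ ≤ c / 4 * (‖u t‖ + ε) := by
    calc ‖η t‖ ≤ c / 4 * (min 1 ε * ‖u t‖ + min 1 ε) := by linarith
      _ ≤ c / 4 * (1 * ‖u t‖ + ε) := by
          gcongr
          exacts [min_le_left 1 ε, min_le_right 1 ε]
      _ = c / 4 * (‖u t‖ + ε) := by rw [one_mul]
  calc ‖u (t + 1)‖ = ‖(u t + α t • A (u t)) + α t • η t‖ := by rw [hu, smul_add, add_assoc]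
    _ ≤ ‖u t + α t • A (u t)‖ + α t * ‖η t‖ := by
        simpa [norm_smul, abs_of_nonneg (hα0 t)] using norm_add_le (u t + α t • A (u t)) (α t • η t)
    _ ≤ (1 - c / 2 * α t) * ‖u t‖ + α t * (c / 4 * (‖u t‖ + ε)) :=
        add_le_add (norm_add_smul_le_of_inner_le hA (hα0 t) hαc hαA (u t))
          (mul_le_mul_of_nonneg_left hη' (hα0 t))
    _ = (1 - c / 4 * α t) * ‖u t‖ + c / 4 * α t * ε := by ring

/- In the variable `u = z + M z + N` the increments of `M` and `N` cancel the fluctuations of `A'`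
and `c'`, which leaves the averaged recursion with a perturbation of order `‖M‖ + ‖N‖`. -/
theorem tendsto_nhds_zero_of_linear_recursion_of_correctors
    {A' M : ℕ → E →L[ℝ] E} {c' N z : ℕ → E}
    (hA' : A' =O[atTop] (1 : ℕ → ℝ)) (hc' : c' =O[atTop] (1 : ℕ → ℝ))
    (hM : ∀ t, M (t + 1) = M t - α t • (A' t - A)) (hM0 : Tendsto M atTop (𝓝 0))
    (hN : ∀ t, N (t + 1) = N t - α t • c' t) (hN0 : Tendsto N atTop (𝓝 0))
    (hz : ∀ t, z (t + 1) = z t + α t • (A' t (z t) + c' t)) : Tendsto z atTop (𝓝 0) := by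
  set u : ℕ → E := fun t => z t + M t (z t) + N t with hu
  have hM1 : M =o[atTop] (1 : ℕ → ℝ) := (isLittleO_one_iff ℝ).2 hM0
  have hN1 : N =o[atTop] (1 : ℕ → ℝ) := (isLittleO_one_iff ℝ).2 hN0
  have hrec : ∀ t, u (t + 1) =
      u t + α t • (A (u t) + (M (t + 1) (A' t (z t) + c' t) - A (M t (z t) + N t))) := by
    intro t
    have hMz : M (t + 1) (z t) = M t (z t) - α t • (A' t (z t) - A (z t)) := by simp [hM]
    simp only [hu, hz, hN, map_add, map_smul, hMz, smul_add, smul_sub]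
    abel
  have hone : (1 : ℕ → ℝ) =O[atTop] fun t => 1 + ‖u t‖ := IsBigO.of_bound 1 <|
    Eventually.of_forall fun t => by simp [abs_of_nonneg (by positivity : 0 ≤ 1 + ‖u t‖)]
  have hzO : z =O[atTop] fun t => 1 + ‖u t‖ := isBigO_one_add_norm_add_clm_apply_add hM1 hN1
  have hupdate : (fun t => A' t (z t) + c' t) =O[atTop] fun t => 1 + ‖u t‖ := by
    refine (isBoundedBilinearMap_apply.isBigO_comp (g := A') (h := z)).trans ?_ |>.add
      (hc'.trans hone)
    simpa using hA'.norm_left.mul hzO.norm_left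
  have hMz : (fun t => M t (z t)) =o[atTop] fun t => 1 + ‖u t‖ := isLittleO_clm_apply hM1 hzO
  have hM1' : (fun t => M (t + 1)) =o[atTop] (1 : ℕ → ℝ) :=
    hM1.comp_tendsto (tendsto_add_atTop_nat 1)
  have hu0 : Tendsto u atTop (𝓝 0) :=
    tendsto_nhds_zero_of_linear_recursion_add_isLittleO hc hA hα0 hαlim hαsum hrec <|
      (isLittleO_clm_apply hM1' hupdate).sub <| (A.isBigO_comp _ _).trans_isLittleO <|
        hMz.add (hN1.trans_isBigO hone)
  have hMz0 : Tendsto (fun t => M t (z t)) atTop (𝓝 0) :=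
    (isLittleO_one_iff ℝ).1 <| hMz.trans_isBigO <|
      (tendsto_const_nhds.add hu0.norm).isBigO_one ℝ
  have hz_eq : z = fun t => u t - M t (z t) - N t := by funext t; simp only [hu]; abel
  rw [hz_eq]
  simpa using (hu0.sub hMz0).sub hN0

theorem tendsto_nhds_zero_of_linear_recursion_of_tendsto_sum {A' : ℕ → E →L[ℝ] E} {c' z : ℕ → E}
    (hA' : A' =O[atTop] (1 : ℕ → ℝ)) (hc' : c' =O[atTop] (1 : ℕ → ℝ))
    (hM : ∃ M, Tendsto (fun n => ∑ t ∈ range n, α t • (A' t - A)) atTop (𝓝 M))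
    (hN : ∃ N, Tendsto (fun n => ∑ t ∈ range n, α t • c' t) atTop (𝓝 N))
    (hz : ∀ t, z (t + 1) = z t + α t • (A' t (z t) + c' t)) : Tendsto z atTop (𝓝 0) := by
  obtain ⟨M, hM⟩ := hM
  obtain ⟨N, hN⟩ := hN
  refine tendsto_nhds_zero_of_linear_recursion_of_correctors hc hA hα0 hαlim hαsum hA' hc'
    (M := fun n => M - ∑ t ∈ range n, α t • (A' t - A)) (fun n => ?_) ?_
    (N := fun n => N - ∑ t ∈ range n, α t • c' t) (fun n => ?_) ?_ hz
  · rw [sum_range_succ, sub_add_eq_sub_sub]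
  · simpa using hM.const_sub M
  · rw [sum_range_succ, sub_add_eq_sub_sub]
  · simpa using hN.const_sub N

end LinearRecursion

theorem exists_pos_forall_inner_le_neg_mul_sq {E : Type*} [NormedAddCommGroup E]
    [InnerProductSpace ℝ E] [FiniteDimensional ℝ E] (A : E →L[ℝ] E)
    (hA : ∀ u, u ≠ 0 → inner ℝ u (A u) < 0) :
    ∃ c > 0, ∀ u, inner ℝ u (A u) ≤ -c * ‖u‖ ^ 2 := by
  have hneg : ∀ u ∈ Metric.sphere (0 : E) 1, 0 < -inner ℝ u (A u) := fun u hu =>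
    neg_pos.2 (hA u (ne_zero_of_mem_unit_sphere ⟨u, hu⟩))
  obtain ⟨c, hc, hcA⟩ := (isCompact_sphere (0 : E) 1).exists_forall_le'
    (f := fun u => -inner ℝ u (A u)) (by fun_prop) hneg
  refine ⟨c, hc, fun u => ?_⟩
  rcases eq_or_ne u 0 with rfl | hu
  · simp
  have hunit := hcA (‖u‖⁻¹ • u) (by simp [norm_smul, hu])
  rw [map_smul, real_inner_smul_left, real_inner_smul_right] at hunit
  calc inner ℝ u (A u) = ‖u‖ ^ 2 * (‖u‖⁻¹ * (‖u‖⁻¹ * inner ℝ u (A u))) := by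
        field_simp [norm_ne_zero_iff.2 hu]
    _ ≤ ‖u‖ ^ 2 * -c := by gcongr; linarith
    _ = -c * ‖u‖ ^ 2 := mul_comm _ _

/-! ### Martingale differences -/

section MartingaleDifference

variable {Ω : Type*} {m0 : MeasurableSpace Ω} {μ : Measure Ω} {ℱ : Filtration ℕ m0}
  {ξ : ℕ → Ω → ℝ}

/-- A square-integrable martingale difference sequence. The index is shifted: `ξ n` is the increment
from time `n` to time `n + 1`. -/
structure IsL2MartingaleDifference (ξ : ℕ → Ω → ℝ) (ℱ : Filtration ℕ m0) (μ : Measure Ω) :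
    Prop where
  stronglyMeasurable : ∀ n, StronglyMeasurable[ℱ (n + 1)] (ξ n)
  memLp : ∀ n, MemLp (ξ n) 2 μ
  condExp_eq_zero : ∀ n, μ[ξ n | ℱ n] =ᵐ[μ] 0

namespace IsL2MartingaleDifference

theorem memLp_sum (hξ : IsL2MartingaleDifference ξ ℱ μ) (n : ℕ) :
    MemLp (fun ω => ∑ t ∈ range n, ξ t ω) 2 μ :=
  memLp_finsetSum _ fun t _ => hξ.memLp t

theorem stronglyMeasurable_sum (hξ : IsL2MartingaleDifference ξ ℱ μ) (n : ℕ) :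
    StronglyMeasurable[ℱ n] fun ω => ∑ t ∈ range n, ξ t ω :=
  Finset.stronglyMeasurable_fun_sum _ fun t ht =>
    (hξ.stronglyMeasurable t).mono (ℱ.mono (mem_range.1 ht))

variable [IsFiniteMeasure μ]

theorem martingale_sum (hξ : IsL2MartingaleDifference ξ ℱ μ) :
    Martingale (fun n ω => ∑ t ∈ range n, ξ t ω) ℱ μ := by
  refine martingale_of_condExp_sub_eq_zero_nat hξ.stronglyMeasurable_sum
    (fun n => (hξ.memLp_sum n).integrable one_le_two) fun n => ?_
  have hincr : (fun ω => ∑ t ∈ range (n + 1), ξ t ω) - (fun ω => ∑ t ∈ range n, ξ t ω) = ξ n := by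
    funext ω
    simp [sum_range_succ]
  rw [hincr]
  exact hξ.condExp_eq_zero n

theorem integral_mul_eq_zero (hξ : IsL2MartingaleDifference ξ ℱ μ) {n : ℕ} {f : Ω → ℝ}
    (hf : StronglyMeasurable[ℱ n] f) (hf2 : MemLp f 2 μ) : ∫ ω, f ω * ξ n ω ∂μ = 0 := by
  have hpull : μ[f * ξ n | ℱ n] =ᵐ[μ] 0 := by
    refine (condExp_mul_of_stronglyMeasurable_left hf (hf2.integrable_mul (hξ.memLp n))
      ((hξ.memLp n).integrable one_le_two)).trans ?_
    filter_upwards [hξ.condExp_eq_zero n] with ω hω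
    simp [hω]
  calc ∫ ω, f ω * ξ n ω ∂μ = ∫ ω, (μ[f * ξ n | ℱ n]) ω ∂μ := (integral_condExp (ℱ.le n)).symm
    _ = 0 := integral_eq_zero_of_ae hpull

theorem integral_sum_sq (hξ : IsL2MartingaleDifference ξ ℱ μ) (n : ℕ) :
    ∫ ω, (∑ t ∈ range n, ξ t ω) ^ 2 ∂μ = ∑ t ∈ range n, ∫ ω, ξ t ω ^ 2 ∂μ := by
  induction n with
  | zero => simp
  | succ n ih =>
    have hsq := (hξ.memLp_sum n).integrable_sq
    have hcross : Integrable (fun ω => 2 * ((∑ t ∈ range n, ξ t ω) * ξ n ω)) μ :=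
      ((hξ.memLp_sum n).integrable_mul (hξ.memLp n)).const_mul 2
    have hadd : Integrable (fun ω => (∑ t ∈ range n, ξ t ω) ^ 2 +
        2 * ((∑ t ∈ range n, ξ t ω) * ξ n ω)) μ := hsq.add hcross
    have hlast := (hξ.memLp n).integrable_sq
    calc ∫ ω, (∑ t ∈ range (n + 1), ξ t ω) ^ 2 ∂μ
        = ∫ ω, ((∑ t ∈ range n, ξ t ω) ^ 2 + 2 * ((∑ t ∈ range n, ξ t ω) * ξ n ω)
            + ξ n ω ^ 2) ∂μ := by
          congr with ω
          rw [sum_range_succ]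
          ring
      _ = ∫ ω, (∑ t ∈ range n, ξ t ω) ^ 2 ∂μ + 2 * ∫ ω, (∑ t ∈ range n, ξ t ω) * ξ n ω ∂μ
            + ∫ ω, ξ n ω ^ 2 ∂μ := by
          rw [integral_add hadd hlast, integral_add hsq hcross, integral_const_mul]
      _ = ∑ t ∈ range (n + 1), ∫ ω, ξ t ω ^ 2 ∂μ := by
          rw [hξ.integral_mul_eq_zero (hξ.stronglyMeasurable_sum n) (hξ.memLp_sum n), ih,
            sum_range_succ]
          ring

theorem ae_exists_tendsto_sum (hξ : IsL2MartingaleDifference ξ ℱ μ)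
    (hsum : Summable fun n => ∫ ω, ξ n ω ^ 2 ∂μ) :
    ∀ᵐ ω ∂μ, ∃ L, Tendsto (fun n => ∑ t ∈ range n, ξ t ω) atTop (nhds L) := by
  refine hξ.martingale_sum.submartingale.exists_ae_tendsto_of_bdd
    (R := (μ.real Set.univ + ∑' n, ∫ ω, ξ n ω ^ 2 ∂μ).toNNReal) fun n => ?_
  have hint := (hξ.memLp_sum n).integrable one_le_two
  have hsq := (hξ.memLp_sum n).integrable_sq
  rw [eLpNorm_one_eq_lintegral_enorm, ← ofReal_integral_norm_eq_lintegral_enorm hint]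
  refine ENNReal.ofReal_le_ofReal ?_
  calc ∫ ω, ‖∑ t ∈ range n, ξ t ω‖ ∂μ ≤ ∫ ω, (1 + (∑ t ∈ range n, ξ t ω) ^ 2) ∂μ := by
        refine integral_mono hint.norm ((integrable_const _).add hsq) fun ω => ?_
        have := sq_nonneg (|∑ t ∈ range n, ξ t ω| - 1)
        rw [sub_sq, sq_abs] at this
        simp only [Real.norm_eq_abs]
        linarith [abs_nonneg (∑ t ∈ range n, ξ t ω)]
    _ = μ.real Set.univ + ∑ t ∈ range n, ∫ ω, ξ t ω ^ 2 ∂μ := by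
        rw [integral_add (integrable_const _) hsq, hξ.integral_sum_sq]
        simp
    _ ≤ μ.real Set.univ + ∑' n, ∫ ω, ξ n ω ^ 2 ∂μ := by
        gcongr
        exact hsum.sum_le_tsum _ fun t _ => integral_nonneg fun ω => sq_nonneg _

end IsL2MartingaleDifference

end MartingaleDifference

/-! ### Laws of Markov chains -/

section MarkovLaw

variable {S : Type*} [MeasurableSpace S] {P : Matrix S S ℝ} {μ : Measure (ℕ → S)}

/-- `μ` is the law of a Markov chain with transition matrix `P`: conditionally on the path up to
time `n`, the next state is drawn from the row of `P` at the state visited at time `n`. The initial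
distribution is left unspecified. -/
def IsMarkovLaw (P : Matrix S S ℝ) (μ : Measure (ℕ → S)) : Prop :=
  ∀ (n : ℕ) (x : ℕ → S), μ.real {ω | ∀ i ≤ n + 1, ω i = x i} =
    μ.real {ω | ∀ i ≤ n, ω i = x i} * P (x n) (x (n + 1))

theorem isMarkovLaw_of_measure_cylinder (hP : ∀ i j, 0 ≤ P i j) {ι : S → ℝ}
    (hμ : ∀ (n : ℕ) (x : ℕ → S), μ {ω | ∀ i ≤ n, ω i = x i} =
      ENNReal.ofReal (ι (x 0) * ∏ i ∈ range n, P (x i) (x (i + 1)))) :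
    IsMarkovLaw P μ := by
  intro n x
  rw [measureReal_def, measureReal_def, hμ, hμ, prod_range_succ, ← mul_assoc,
    ENNReal.ofReal_mul' (hP _ _), ENNReal.toReal_mul, ENNReal.toReal_ofReal (hP _ _)]

theorem memLp_comp_of_finite {Ω β : Type*} [MeasurableSpace Ω] {ρ : Measure Ω} [IsFiniteMeasure ρ]
    [Finite β] [MeasurableSpace β] [MeasurableSingletonClass β] {T : Ω → β} (hT : Measurable T)
    (f : β → ℝ) (p : ENNReal) : MemLp (fun ω => f (T ω)) p ρ :=
  MemLp.of_discrete.comp_of_map hT.aemeasurable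

theorem integral_comp_eq_sum {Ω β : Type*} [MeasurableSpace Ω] {ρ : Measure Ω}
    [IsFiniteMeasure ρ] [Fintype β] [MeasurableSpace β] [MeasurableSingletonClass β] {T : Ω → β}
    (hT : Measurable T) (f : β → ℝ) : ∫ ω, f (T ω) ∂ρ = ∑ b, ρ.real {ω | T ω = b} * f b := by
  rw [← integral_map hT.aemeasurable (by fun_prop), integral_fintype Integrable.of_finite]
  refine sum_congr rfl fun b _ => ?_
  rw [map_measureReal_apply hT (measurableSet_singleton b), smul_eq_mul]
  rfl

theorem measurable_eval_piLE {i n : ℕ} (hi : i ≤ n) :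
    Measurable[Filtration.piLE (X := fun _ : ℕ => S) n] fun ω : ℕ → S => ω i := by
  rw [Filtration.piLE_eq_comap_frestrictLe]
  exact (measurable_pi_apply (⟨i, mem_Iic.2 hi⟩ : Iic n)).comp
    (comap_measurable (Preorder.frestrictLe (π := fun _ : ℕ => S) n))

theorem stronglyMeasurable_transition [Finite S] [MeasurableSingletonClass S]
    (F : S → S → ℝ) (n : ℕ) :
    StronglyMeasurable[Filtration.piLE (X := fun _ : ℕ => S) (n + 1)]
      fun ω => F (ω n) (ω (n + 1)) :=
  ((measurable_of_finite (Function.uncurry F)).comp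
    ((measurable_eval_piLE n.le_succ).prodMk (measurable_eval_piLE le_rfl))).stronglyMeasurable

theorem memLp_transition [Finite S] [MeasurableSingletonClass S] [IsFiniteMeasure μ]
    (F : S → S → ℝ) (n : ℕ) (p : ENNReal) : MemLp (fun ω => F (ω n) (ω (n + 1))) p μ :=
  memLp_comp_of_finite (T := fun ω : ℕ → S => (ω n, ω (n + 1))) (by fun_prop)
    (fun q : S × S => F q.1 q.2) p

namespace IsMarkovLaw

open Preorder

theorem measureReal_prefix_next (hμ : IsMarkovLaw P μ) {n : ℕ} (z : Iic n → S) (j : S) :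
    μ.real {ω | frestrictLe n ω = z ∧ ω (n + 1) = j} =
      μ.real {ω | frestrictLe n ω = z} * P (z ⟨n, mem_Iic.2 le_rfl⟩) j := by
  set x : ℕ → S := fun i => if h : i ≤ n then z ⟨i, mem_Iic.2 h⟩ else j with hx
  have hprefix : ∀ ω : ℕ → S, frestrictLe n ω = z ↔ ∀ i ≤ n, ω i = x i := fun ω => by
    simp +contextual [hx, funext_iff, frestrictLe_apply]
  have hnext : ∀ ω : ℕ → S, (frestrictLe n ω = z ∧ ω (n + 1) = j) ↔ ∀ i ≤ n + 1, ω i = x i :=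
    fun ω => by simp [hprefix, Nat.le_succ_iff_eq_or_le, or_imp, forall_and, hx, and_comm]
  have hcyl := hμ n x
  simp only [← hnext, ← hprefix] at hcyl
  simpa [hx] using hcyl

variable [Fintype S] [MeasurableSingletonClass S] [IsFiniteMeasure μ]

theorem integral_prefix_next (hμ : IsMarkovLaw P μ) {n : ℕ} (f : (Iic n → S) → S → ℝ) :
    ∫ ω, f (frestrictLe n ω) (ω (n + 1)) ∂μ =
      ∫ ω, ∑ j, P (ω n) j * f (frestrictLe n ω) j ∂μ := by
  have hprefix : Measurable (frestrictLe (π := fun _ : ℕ => S) n) := measurable_frestrictLe n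
  calc ∫ ω, f (frestrictLe n ω) (ω (n + 1)) ∂μ
      = ∑ p : (Iic n → S) × S, μ.real {ω | (frestrictLe n ω, ω (n + 1)) = p} * f p.1 p.2 :=
        integral_comp_eq_sum (hprefix.prodMk (measurable_pi_apply (n + 1))) fun p => f p.1 p.2
    _ = ∑ z : Iic n → S, μ.real {ω | frestrictLe n ω = z} *
          ∑ j, P (z ⟨n, mem_Iic.2 le_rfl⟩) j * f z j := by
        simp only [Fintype.sum_prod_type, Prod.mk.injEq, hμ.measureReal_prefix_next, mul_sum,
          mul_assoc]
    _ = ∫ ω, ∑ j, P (ω n) j * f (frestrictLe n ω) j ∂μ :=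
        (integral_comp_eq_sum hprefix _).symm

theorem condExp_transition (hμ : IsMarkovLaw P μ) (F : S → S → ℝ) (n : ℕ) :
    μ[fun ω => F (ω n) (ω (n + 1)) | Filtration.piLE (X := fun _ : ℕ => S) n] =ᵐ[μ]
      fun ω => ∑ j, P (ω n) j * F (ω n) j := by
  have hprefix : Measurable (frestrictLe (π := fun _ : ℕ => S) n) := measurable_frestrictLe n
  have hrow : Measurable[Filtration.piLE (X := fun _ : ℕ => S) n]
      fun ω => ∑ j, P (ω n) j * F (ω n) j :=
    (measurable_of_finite fun i : S => ∑ j, P i j * F i j).comp (measurable_eval_piLE le_rfl)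
  refine (ae_eq_condExp_of_forall_setIntegral_eq (Filtration.piLE.le n)
    ((memLp_transition F n 1).integrable le_rfl) (fun s _ _ => ?_)
    (fun s hs _ => ?_) hrow.stronglyMeasurable.aestronglyMeasurable).symm
  · exact ((memLp_comp_of_finite (measurable_pi_apply (X := fun _ : ℕ => S) n)
      (fun i => ∑ j, P i j * F i j) 1).integrable le_rfl).integrableOn
  · rw [Filtration.piLE_eq_comap_frestrictLe] at hs
    obtain ⟨B, hB, rfl⟩ := hs
    rw [← integral_indicator (hprefix hB), ← integral_indicator (hprefix hB)]
    classical
    have hnext := hμ.integral_prefix_next (n := n)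
      fun z j => B.indicator (fun z => F (z ⟨n, mem_Iic.2 le_rfl⟩) j) z
    calc ∫ ω, (frestrictLe n ⁻¹' B).indicator (fun ω => ∑ j, P (ω n) j * F (ω n) j) ω ∂μ
        = ∫ ω, ∑ j, P (ω n) j *
          B.indicator (fun z => F (z ⟨n, mem_Iic.2 le_rfl⟩) j) (frestrictLe n ω) ∂μ := by
          congr with ω
          by_cases hω : frestrictLe n ω ∈ B <;> simp [hω]
      _ = ∫ ω, (frestrictLe n ⁻¹' B).indicator (fun ω => F (ω n) (ω (n + 1))) ω ∂μ := hnext.symm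

theorem isL2MartingaleDifference (hμ : IsMarkovLaw P μ) {F : ℕ → S → S → ℝ}
    (hF : ∀ n i, ∑ j, P i j * F n i j = 0) :
    IsL2MartingaleDifference (fun n ω => F n (ω n) (ω (n + 1)))
      (Filtration.piLE (X := fun _ : ℕ => S)) μ where
  stronglyMeasurable n := stronglyMeasurable_transition (F n) n
  memLp n := memLp_transition (F n) n 2
  condExp_eq_zero n := (hμ.condExp_transition (F n) n).trans <| by simp only [hF]; rfl

theorem ae_exists_tendsto_sum_of_rowCentred (hμ : IsMarkovLaw P μ) {H : S → S → ℝ}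
    (hH : ∀ i, ∑ j, P i j * H i j = 0) {α : ℕ → ℝ} (hα : Summable fun t => α t ^ 2) :
    ∀ᵐ ω ∂μ, ∃ L,
      Tendsto (fun n => ∑ t ∈ range n, α t * H (ω t) (ω (t + 1))) atTop (nhds L) := by
  have hξ := hμ.isL2MartingaleDifference (F := fun t i j => α t * H i j) fun t i => by
    simp only [mul_left_comm _ (α t), ← mul_sum, hH, mul_zero]
  obtain ⟨C, hC⟩ := Finite.exists_le fun q : S × S => H q.1 q.2 ^ 2
  refine hξ.ae_exists_tendsto_sum <| (hα.mul_right (μ.real Set.univ * C)).of_nonneg_of_le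
    (fun t => integral_nonneg fun ω => sq_nonneg _) fun t => ?_
  calc ∫ ω, (α t * H (ω t) (ω (t + 1))) ^ 2 ∂μ ≤ ∫ _, α t ^ 2 * C ∂μ := by
        refine integral_mono (hξ.memLp t).integrable_sq (integrable_const _) fun ω => ?_
        simp only [mul_pow]
        exact mul_le_mul_of_nonneg_left (hC (ω t, ω (t + 1))) (sq_nonneg _)
    _ = α t ^ 2 * (μ.real Set.univ * C) := by rw [integral_const, smul_eq_mul]; ring

end IsMarkovLaw

end MarkovLaw

/-! ### Irreducible stochastic matrices -/

section StochasticMatrix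

variable {S : Type*} [Fintype S]

/-- The mean of `F` over the transitions `(i, j)` of a chain with transition matrix `P` whose
current state `i` has law `d`. -/
def transitionMean {E : Type*} [AddCommMonoid E] [Module ℝ E] (d : S → ℝ) (P : Matrix S S ℝ)
    (F : S → S → E) : E :=
  ∑ i, ∑ j, (d i * P i j) • F i j

theorem map_transitionMean {E E' : Type*} [AddCommMonoid E] [Module ℝ E] [AddCommMonoid E']
    [Module ℝ E'] (L : E →ₗ[ℝ] E') (d : S → ℝ) (P : Matrix S S ℝ) (F : S → S → E) :
    L (transitionMean d P F) = transitionMean d P fun i j => L (F i j) := by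
  simp only [transitionMean, map_sum, map_smul]

theorem transitionMean_fst {E : Type*} [AddCommMonoid E] [Module ℝ E] {P : Matrix S S ℝ}
    (hP : P *ᵥ 1 = 1) (d : S → ℝ) (f : S → E) :
    transitionMean d P (fun i _ => f i) = ∑ i, d i • f i := by
  have hrow : ∀ i, ∑ j, P i j = 1 := fun i => by simpa [mulVec, dotProduct] using congrFun hP i
  simp only [transitionMean, ← sum_smul, ← mul_sum, hrow, mul_one]

theorem transitionMean_snd {E : Type*} [AddCommMonoid E] [Module ℝ E] {P : Matrix S S ℝ}
    {d : S → ℝ} (hdP : d ᵥ* P = d) (f : S → E) :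
    transitionMean d P (fun _ j => f j) = ∑ j, d j • f j := by
  have hcol : ∀ j, ∑ i, d i * P i j = d j := congrFun hdP
  simp only [transitionMean]
  rw [sum_comm]
  simp only [← sum_smul, hcol]

theorem abs_transitionMean_mul_le {P : Matrix S S ℝ} {d : S → ℝ} (hP : ∀ i j, 0 ≤ P i j)
    (hP1 : P *ᵥ 1 = 1) (hd : ∀ i, 0 ≤ d i) (hdP : d ᵥ* P = d) (v : S → ℝ) :
    |transitionMean d P fun i j => v i * v j| ≤ ∑ i, d i * v i ^ 2 := by
  calc |transitionMean d P fun i j => v i * v j|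
      ≤ ∑ i, ∑ j, |d i * P i j * (v i * v j)| :=
        (abs_sum_le_sum_abs _ _).trans (sum_le_sum fun i _ => abs_sum_le_sum_abs _ _)
    _ ≤ transitionMean d P fun i j => v i ^ 2 / 2 + v j ^ 2 / 2 := by
        refine sum_le_sum fun i _ => sum_le_sum fun j _ => ?_
        have hdPij : 0 ≤ d i * P i j := mul_nonneg (hd i) (hP i j)
        rw [abs_mul, abs_of_nonneg hdPij, abs_mul, smul_eq_mul]
        gcongr
        linarith [two_mul_le_add_sq |v i| |v j|, sq_abs (v i), sq_abs (v j)]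
    _ = ∑ i, d i * v i ^ 2 := by
        have hfst := transitionMean_fst hP1 d fun i => v i ^ 2 / 2
        have hsnd := transitionMean_snd hdP fun j => v j ^ 2 / 2
        simp only [transitionMean, smul_add, sum_add_distrib] at hfst hsnd ⊢
        rw [hfst, hsnd, ← sum_add_distrib]
        refine sum_congr rfl fun i _ => ?_
        rw [← smul_add, add_halves, smul_eq_mul]

variable [DecidableEq S]

theorem pow_mulVec_eq_self {P : Matrix S S ℝ} {g : S → ℝ} (hg : P *ᵥ g = g) (n : ℕ) :
    P ^ n *ᵥ g = g := by
  induction n with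
  | zero => simp
  | succ n ih => rw [pow_succ, ← mulVec_mulVec, hg, ih]

theorem vecMul_pow_eq_self_s13 {P : Matrix S S ℝ} {d : S → ℝ} (hd : d ᵥ* P = d) (n : ℕ) :
    d ᵥ* P ^ n = d := by
  induction n with
  | zero => simp
  | succ n ih => rw [pow_succ, ← vecMul_vecMul, ih, hd]

variable {P : Matrix S S ℝ} (hP : P ∈ rowStochastic ℝ S)
  (hirr : ∀ i j, ∃ n : ℕ, 0 < (P ^ n) i j) {d : S → ℝ}
include hP hirr

/- Maximum principle: at a state maximizing `g`, the value `g i` is an average of the values of `g`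
at the states reachable from `i`. -/
theorem apply_eq_apply_of_mulVec_eq_self {g : S → ℝ} (hg : P *ᵥ g = g) (i j : S) : g i = g j := by
  obtain ⟨m, hm⟩ : ∃ m, ∀ k, g k ≤ g m := have : Nonempty S := ⟨i⟩; Finite.exists_max g
  suffices hmax : ∀ k, g k = g m by rw [hmax i, hmax j]
  intro k
  obtain ⟨n, hn⟩ := hirr m k
  have hPn : P ^ n ∈ rowStochastic ℝ S := pow_mem hP n
  have hsum : ∑ l, (P ^ n) m l * (g m - g l) = 0 := by
    have hgn : ∑ l, (P ^ n) m l * g l = g m := congrFun (pow_mulVec_eq_self hg n) m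
    simp only [mul_sub, sum_sub_distrib, ← sum_mul, sum_row_of_mem_rowStochastic hPn, hgn, one_mul,
      sub_self]
  have hk : (P ^ n) m k * (g m - g k) = 0 := (sum_eq_zero_iff_of_nonneg fun l _ =>
    mul_nonneg (nonneg_of_mem_rowStochastic hPn) (sub_nonneg.2 (hm l))).1 hsum k (mem_univ k)
  exact (sub_eq_zero.1 ((mul_eq_zero_iff_left hn.ne').1 hk)).symm

theorem pos_of_vecMul_eq_self_s13 (hd : d ∈ stdSimplex ℝ S) (hdP : d ᵥ* P = d) (j : S) : 0 < d j := by
  obtain ⟨i, -, hi⟩ : ∃ i ∈ univ, (0 : S → ℝ) i < d i :=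
    exists_lt_of_sum_lt (by simp [hd.2])
  obtain ⟨n, hn⟩ := hirr i j
  have hPn : P ^ n ∈ rowStochastic ℝ S := pow_mem hP n
  calc 0 < ∑ k, d k * (P ^ n) k j := sum_pos'
        (fun k _ => mul_nonneg (hd.1 k) (nonneg_of_mem_rowStochastic hPn))
        ⟨i, mem_univ i, mul_pos hi hn⟩
    _ = d j := congrFun (vecMul_pow_eq_self_s13 hdP n) j

/- The operator `g ↦ (1 - P) g + d(g)` is injective by the maximum principle, hence surjective, and
a preimage `g` of `f` satisfies `d(g) = d(f)`. -/
theorem exists_sub_mulVec_eq (hd : ∑ i, d i = 1) (hdP : d ᵥ* P = d) (f : S → ℝ) :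
    ∃ g : S → ℝ, ∀ i, g i - (P *ᵥ g) i = f i - d ⬝ᵥ f := by
  set Q : Matrix S S ℝ := 1 - P + replicateRow S d with hQdef
  have hQ : ∀ g i, (Q *ᵥ g) i = g i - (P *ᵥ g) i + d ⬝ᵥ g := fun g i => by
    rw [hQdef, add_mulVec, sub_mulVec, one_mulVec]
    rfl
  have hdQ : ∀ g, d ⬝ᵥ Q *ᵥ g = d ⬝ᵥ g := by
    intro g
    have hQg : Q *ᵥ g = g - P *ᵥ g + fun _ => d ⬝ᵥ g := funext (hQ g)
    rw [hQg, dotProduct_add, dotProduct_sub, dotProduct_mulVec, hdP, sub_self, zero_add]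
    simp only [dotProduct, ← sum_mul, hd, one_mul]
  have hinj : Function.Injective Q.mulVec := by
    refine (injective_iff_map_eq_zero Q.mulVecLin).2 fun g (hg : Q *ᵥ g = 0) => ?_
    have hdg : d ⬝ᵥ g = 0 := by rw [← hdQ, hg, dotProduct_zero]
    have hgP : P *ᵥ g = g := funext fun i => by
      have := hQ g i
      rw [hg, hdg, Pi.zero_apply] at this
      linarith
    funext i
    calc g i = ∑ j, d j * g i := by rw [← sum_mul, hd, one_mul]
      _ = d ⬝ᵥ g := sum_congr rfl fun j _ => by
          rw [apply_eq_apply_of_mulVec_eq_self hP hirr hgP i j]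
      _ = 0 := hdg
  obtain ⟨g, rfl⟩ := mulVec_surjective_iff_isUnit.2 (mulVec_injective_iff_isUnit.1 hinj) f
  exact ⟨g, fun i => by rw [hdQ, hQ, add_sub_cancel_right]⟩

theorem exists_rowCentred_add_sub (hd : ∑ i, d i = 1) (hdP : d ᵥ* P = d) (F : S → S → ℝ) :
    ∃ (H : S → S → ℝ) (g : S → ℝ), (∀ i, ∑ j, P i j * H i j = 0) ∧
      ∀ i j, F i j - transitionMean d P F = H i j + (g i - g j) := by
  set f : S → ℝ := fun i => ∑ j, P i j * F i j with hf
  obtain ⟨g, hg⟩ := exists_sub_mulVec_eq hP hirr hd hdP f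
  have hmean : d ⬝ᵥ f = transitionMean d P F := by
    simp only [transitionMean, dotProduct, hf, mul_sum, smul_eq_mul, mul_assoc]
  refine ⟨fun i j => F i j - f i + (g j - (P *ᵥ g) i), g, fun i => ?_, fun i j => ?_⟩
  · simp only [mul_add, mul_sub, sum_add_distrib, sum_sub_distrib, ← sum_mul,
      sum_row_of_mem_rowStochastic hP, one_mul, hf, mulVec, dotProduct, sub_self, add_zero]
  · rw [← hmean]
    linarith [hg i]

end StochasticMatrix

/-! ### Step sizes -/

/-- Step sizes of a stochastic approximation scheme: the Robbins–Monro conditions together with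
monotonicity. -/
structure IsRobbinsMonro (α : ℕ → ℝ) : Prop where
  antitone : Antitone α
  not_summable : ¬Summable α
  summable_sq : Summable fun t => α t ^ 2

namespace IsRobbinsMonro

variable {α : ℕ → ℝ}

theorem tendsto_zero (hα : IsRobbinsMonro α) : Tendsto α atTop (nhds 0) := by
  have := hα.summable_sq.tendsto_atTop_zero.sqrt
  simp only [Real.sqrt_sq_eq_abs, Real.sqrt_zero] at this
  exact (tendsto_zero_iff_abs_tendsto_zero α).2 this

theorem nonneg (hα : IsRobbinsMonro α) (t : ℕ) : 0 ≤ α t :=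
  hα.antitone.le_of_tendsto hα.tendsto_zero t

theorem tendsto_sum (hα : IsRobbinsMonro α) :
    Tendsto (fun n => ∑ t ∈ range n, α t) atTop atTop :=
  (not_summable_iff_tendsto_nat_atTop_of_nonneg hα.nonneg).1 hα.not_summable

theorem exists_tendsto_sum_mul_sub (hα : IsRobbinsMonro α) {g : ℕ → ℝ} {C : ℝ}
    (hg : ∀ t, |g t| ≤ C) :
    ∃ L, Tendsto (fun n => ∑ t ∈ range n, α t * (g t - g (t + 1))) atTop (nhds L) := by
  refine cauchySeq_tendsto_of_complete <|
    hα.antitone.cauchySeq_series_mul_of_tendsto_zero_of_bounded hα.tendsto_zero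
      (b := C + C) fun n => ?_
  rw [sum_range_sub', Real.norm_eq_abs]
  exact (abs_sub _ _).trans (add_le_add (hg 0) (hg n))

end IsRobbinsMonro

theorem isRobbinsMonro_one_div_add_rpow {a ν : ℝ} (ha : 0 < a) (hν : 1 / 2 < ν) (hν1 : ν ≤ 1) :
    IsRobbinsMonro fun t : ℕ => 1 / ((t : ℝ) + a) ^ ν where
  antitone s t hst := by
    dsimp only
    gcongr
  not_summable := by
    have hpos : ∀ t : ℕ, |(t : ℝ) + a| = t + a := fun t => abs_of_pos (by positivity)
    have := (Real.summable_one_div_nat_add_rpow a ν).not.2 hν1.not_gt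
    simpa only [hpos] using this
  summable_sq := by
    refine ((Real.summable_one_div_nat_add_rpow a (ν * 2)).2 (by linarith)).congr fun t => ?_
    have hpos : 0 < (t : ℝ) + a := by positivity
    rw [abs_of_pos hpos, Real.rpow_mul hpos.le, Real.rpow_two, div_pow, one_pow]

/-! ### Linear stochastic approximation along a Markov chain -/

theorem isBigO_one_comp_of_finite {ι β E : Type*} [Finite β] [SeminormedAddCommGroup E] (f : β → E)
    (x : ι → β) (l : Filter ι) : (fun t => f (x t)) =O[l] (1 : ι → ℝ) := by
  obtain ⟨C, hC⟩ := Finite.exists_le fun q => ‖f q‖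
  exact Asymptotics.isBigO_of_le' (c := C) _ fun t => by simpa using hC (x t)

theorem isUnit_of_dotProduct_mulVec_ne_zero {κ R : Type*} [Fintype κ] [DecidableEq κ] [Field R]
    {A : Matrix κ κ R} (hA : ∀ u ≠ 0, u ⬝ᵥ A *ᵥ u ≠ 0) : IsUnit A := by
  refine mulVec_injective_iff_isUnit.1 ((injective_iff_map_eq_zero A.mulVecLin).2 ?_)
  intro u (hu : A *ᵥ u = 0)
  by_contra hu0
  exact hA u hu0 (by rw [hu, dotProduct_zero])

namespace IsMarkovLaw

variable {S : Type*} [Fintype S] [DecidableEq S] [MeasurableSpace S] [MeasurableSingletonClass S]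
  {P : Matrix S S ℝ} {μ : Measure (ℕ → S)} [IsFiniteMeasure μ] {d : S → ℝ} {α : ℕ → ℝ}
  (hμ : IsMarkovLaw P μ) (hP : P ∈ rowStochastic ℝ S) (hirr : ∀ i j, ∃ n : ℕ, 0 < (P ^ n) i j)
  (hd : ∑ i, d i = 1) (hdP : d ᵥ* P = d) (hα : IsRobbinsMonro α)
include hμ hP hirr hd hdP hα

theorem ae_exists_tendsto_sum_mul_sub_transitionMean (F : S → S → ℝ) :
    ∀ᵐ ω ∂μ, ∃ L, Tendsto (fun n => ∑ t ∈ range n,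
      α t * (F (ω t) (ω (t + 1)) - transitionMean d P F)) atTop (nhds L) := by
  obtain ⟨H, g, hH, hF⟩ := exists_rowCentred_add_sub hP hirr hd hdP F
  obtain ⟨C, hC⟩ := Finite.exists_le fun i => |g i|
  filter_upwards [hμ.ae_exists_tendsto_sum_of_rowCentred hH hα.summable_sq] with ω ⟨L, hL⟩
  obtain ⟨L', hL'⟩ := hα.exists_tendsto_sum_mul_sub (g := fun t => g (ω t)) fun t => hC (ω t)
  exact ⟨L + L', by simpa only [hF, mul_add, sum_add_distrib] using hL.add hL'⟩

theorem ae_exists_tendsto_sum_smul_sub_transitionMean {E : Type*} [NormedAddCommGroup E]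
    [NormedSpace ℝ E] [FiniteDimensional ℝ E] (F : S → S → E) :
    ∀ᵐ ω ∂μ, ∃ L, Tendsto (fun n => ∑ t ∈ range n,
      α t • (F (ω t) (ω (t + 1)) - transitionMean d P F)) atTop (nhds L) := by
  set e := (Module.finBasis ℝ E).equivFunL
  have hcoord := fun k => hμ.ae_exists_tendsto_sum_mul_sub_transitionMean hP hirr hd hdP hα
    fun i j => e (F i j) k
  filter_upwards [ae_all_iff.2 hcoord] with ω hω
  choose L hL using hω
  refine ⟨e.symm L, ((e.symm.continuous.tendsto L).comp (tendsto_pi_nhds.2 hL)).congr fun n => ?_⟩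
  refine e.injective (funext fun k => ?_)
  simp [transitionMean, map_sum]

theorem ae_tendsto_of_linear_recursion {E : Type*} [NormedAddCommGroup E]
    [InnerProductSpace ℝ E] [FiniteDimensional ℝ E] {A : S → S → E →L[ℝ] E} {b : S → S → E}
    (hA : ∀ u ≠ 0, inner ℝ u (transitionMean d P A u) < 0) {wstar : E}
    (hwstar : transitionMean d P A wstar + transitionMean d P b = 0) {w : ℕ → (ℕ → S) → E}
    (hw : ∀ t ω, w (t + 1) ω =
      w t ω + α t • (A (ω t) (ω (t + 1)) (w t ω) + b (ω t) (ω (t + 1)))) :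
    ∀ᵐ ω ∂μ, Tendsto (fun t => w t ω) atTop (nhds wstar) := by
  obtain ⟨c, hc, hcA⟩ := exists_pos_forall_inner_le_neg_mul_sq (transitionMean d P A) hA
  set b' : S → S → E := fun i j => A i j wstar + b i j with hb'
  have hb'mean : transitionMean d P b' = 0 := by
    rw [← hwstar]
    simp [transitionMean, hb', sum_add_distrib]
  filter_upwards [hμ.ae_exists_tendsto_sum_smul_sub_transitionMean hP hirr hd hdP hα A,
    hμ.ae_exists_tendsto_sum_smul_sub_transitionMean hP hirr hd hdP hα b'] with ω hAω hbω
  simp only [hb'mean, sub_zero] at hbω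
  have hbound : ∀ {E' : Type _} [SeminormedAddCommGroup E'] (F : S → S → E'),
      (fun t => F (ω t) (ω (t + 1))) =O[atTop] (1 : ℕ → ℝ) := fun F =>
    isBigO_one_comp_of_finite (fun q : S × S => F q.1 q.2) (fun t => (ω t, ω (t + 1))) atTop
  refine tendsto_sub_nhds_zero_iff.1 <| tendsto_nhds_zero_of_linear_recursion_of_tendsto_sum hc hcA
    hα.nonneg hα.tendsto_zero hα.tendsto_sum (hbound A) (hbound b') hAω hbω fun t => ?_
  simp only [hw, hb', map_sub]
  abel_nf

theorem ae_tendsto_of_matrix_recursion {κ : Type*} [Fintype κ] [DecidableEq κ]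
    {A : S → S → Matrix κ κ ℝ} {b : S → S → κ → ℝ}
    (hA : ∀ u ≠ 0, u ⬝ᵥ transitionMean d P A *ᵥ u < 0) {w : ℕ → (ℕ → S) → κ → ℝ}
    (hw : ∀ t ω, w (t + 1) ω =
      w t ω + α t • (A (ω t) (ω (t + 1)) *ᵥ w t ω + b (ω t) (ω (t + 1)))) :
    ∀ᵐ ω ∂μ, Tendsto (fun t => w t ω) atTop
      (nhds (-((transitionMean d P A)⁻¹ *ᵥ transitionMean d P b))) := by
  set T := (toEuclideanCLM (n := κ) (𝕜 := ℝ)).toAlgEquiv.toLinearMap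
  set V := (WithLp.linearEquiv 2 ℝ (κ → ℝ)).symm.toLinearMap
  have hTV : ∀ B v, T B (V v) = V (B *ᵥ v) := toEuclideanCLM_toLp
  have hunit : IsUnit (transitionMean d P A).det :=
    (isUnit_iff_isUnit_det _).1 (isUnit_of_dotProduct_mulVec_ne_zero fun u hu => (hA u hu).ne)
  have hneg : ∀ u ≠ 0, inner ℝ u (transitionMean d P (fun i j => T (A i j)) u) < 0 := by
    intro u hu
    rw [← map_transitionMean]
    exact (inner_toEuclideanCLM _ _ _).trans_lt (hA u.ofLp (by simpa using hu))
  have hlim := hμ.ae_tendsto_of_linear_recursion hP hirr hd hdP hα hneg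
    (b := fun i j => V (b i j)) (w := fun t ω => V (w t ω))
    (wstar := V (-((transitionMean d P A)⁻¹ *ᵥ transitionMean d P b)))
    (by rw [← map_transitionMean, ← map_transitionMean, hTV, mulVec_neg, mulVec_mulVec,
          mul_nonsing_inv _ hunit, one_mulVec, map_neg, neg_add_cancel])
    fun t ω => by rw [hw, hTV, map_add, map_smul, map_add]
  filter_upwards [hlim] with ω hω
  exact ((PiLp.continuous_ofLp 2 fun _ : κ => ℝ).tendsto _).comp hω

end IsMarkovLaw

/-! ### Temporal differences -/

section TemporalDifference

variable {S κ : Type*} [Fintype S] [DecidableEq S]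

/-- The matrix `A = Xᵀ D (γ P - 1) X` of linear TD, where the rows of `X` are the features of the
states and `D` is the diagonal matrix with entries `d`. -/
def tdMatrix (X : Matrix S κ ℝ) (d : S → ℝ) (P : Matrix S S ℝ) (γ : ℝ) : Matrix κ κ ℝ :=
  Xᵀ * diagonal d * (γ • P - 1) * X

/-- The vector `b = Xᵀ D r` of linear TD. -/
def tdVector (X : Matrix S κ ℝ) (d r : S → ℝ) : κ → ℝ :=
  (Xᵀ * diagonal d) *ᵥ r

theorem tdMatrix_apply (X : Matrix S κ ℝ) (d : S → ℝ) (P : Matrix S S ℝ) (γ : ℝ) (k l : κ) :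
    tdMatrix X d P γ k l = ∑ i, d i * X i k * (γ * ∑ j, P i j * X j l - X i l) := by
  rw [tdMatrix, Matrix.mul_assoc, Matrix.mul_apply]
  refine sum_congr rfl fun i _ => ?_
  rw [mul_diagonal, transpose_apply, Matrix.sub_mul, Matrix.sub_apply, Matrix.one_mul,
    smul_mul, Matrix.smul_apply, Matrix.mul_apply, smul_eq_mul, mul_comm (X i k)]

theorem transitionMean_vecMulVec_eq_tdMatrix {P : Matrix S S ℝ} (hP : P *ᵥ 1 = 1)
    (X : Matrix S κ ℝ) (d : S → ℝ) (γ : ℝ) :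
    transitionMean d P (fun i j => vecMulVec (X i) (γ • X j - X i)) = tdMatrix X d P γ := by
  ext k l
  have hdiag : ∑ i, ∑ j, d i * P i j * (X i k * X i l) = ∑ i, d i * (X i k * X i l) :=
    transitionMean_fst hP d fun i => X i k * X i l
  calc transitionMean d P (fun i j => vecMulVec (X i) (γ • X j - X i)) k l
      = ∑ i, ∑ j, d i * P i j * (X i k * (γ * X j l - X i l)) :=
        map_transitionMean (entryLinearMap ℝ ℝ k l) d P _
    _ = ∑ i, d i * X i k * (γ * ∑ j, P i j * X j l - X i l) := by
        simp only [mul_sub, sum_sub_distrib, hdiag, mul_sum]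
        congr! 2 with i _ i _
        · exact sum_congr rfl fun j _ => by ring
        · ring
    _ = tdMatrix X d P γ k l := (tdMatrix_apply X d P γ k l).symm

theorem transitionMean_smul_eq_tdVector {P : Matrix S S ℝ} (hP : P *ᵥ 1 = 1) (X : Matrix S κ ℝ)
    (d r : S → ℝ) : transitionMean d P (fun i _ => r i • X i) = tdVector X d r := by
  rw [transitionMean_fst hP]
  ext k
  simp only [tdVector, mulVec, dotProduct, mul_diagonal, Finset.sum_apply, Pi.smul_apply,
    transpose_apply, smul_eq_mul]
  exact sum_congr rfl fun i _ => by ring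

variable [Fintype κ]

theorem dotProduct_tdMatrix_mulVec (X : Matrix S κ ℝ) (d : S → ℝ) (P : Matrix S S ℝ) (γ : ℝ)
    (u : κ → ℝ) : u ⬝ᵥ tdMatrix X d P γ *ᵥ u =
      γ * transitionMean d P (fun i j => (X *ᵥ u) i * (X *ᵥ u) j) -
        ∑ i, d i * (X *ᵥ u) i ^ 2 := by
  set v := X *ᵥ u with hv
  rw [tdMatrix, ← mulVec_mulVec, ← mulVec_mulVec, ← mulVec_mulVec, dotProduct_mulVec,
    vecMul_transpose, ← hv, transitionMean, mul_sum, ← sum_sub_distrib]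
  refine sum_congr rfl fun i _ => ?_
  have hPv : (P *ᵥ v) i = ∑ j, P i j * v j := rfl
  have hcross : ∑ j, (d i * P i j) • (v i * v j) = d i * v i * (P *ᵥ v) i := by
    rw [hPv, mul_sum]
    exact sum_congr rfl fun j _ => by rw [smul_eq_mul]; ring
  rw [hcross, mulVec_diagonal, sub_mulVec, one_mulVec, smul_mulVec, Pi.sub_apply, Pi.smul_apply,
    smul_eq_mul]
  ring

theorem dotProduct_tdMatrix_mulVec_neg {P : Matrix S S ℝ} (hP : ∀ i j, 0 ≤ P i j)
    (hP1 : P *ᵥ 1 = 1) {d : S → ℝ} (hd : ∀ i, 0 < d i) (hdP : d ᵥ* P = d) {X : Matrix S κ ℝ}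
    (hX : Function.Injective X.mulVec) {γ : ℝ} (hγ : |γ| < 1) {u : κ → ℝ} (hu : u ≠ 0) :
    u ⬝ᵥ tdMatrix X d P γ *ᵥ u < 0 := by
  set v := X *ᵥ u with hv
  obtain ⟨s, hs⟩ : ∃ s, v s ≠ 0 :=
    Function.ne_iff.1 fun h => hu (hX (h.trans (mulVec_zero X).symm))
  have hpos : 0 < ∑ i, d i * v i ^ 2 :=
    sum_pos' (fun i _ => mul_nonneg (hd i).le (sq_nonneg _))
      ⟨s, mem_univ s, mul_pos (hd s) (sq_pos_of_ne_zero hs)⟩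
  rw [dotProduct_tdMatrix_mulVec, ← hv, sub_neg]
  calc γ * transitionMean d P (fun i j => v i * v j)
      ≤ |γ| * |transitionMean d P fun i j => v i * v j| := (le_abs_self _).trans (abs_mul _ _).le
    _ ≤ |γ| * ∑ i, d i * v i ^ 2 := by
        gcongr
        exact abs_transitionMean_mul_le hP hP1 (fun i => (hd i).le) hdP v
    _ < ∑ i, d i * v i ^ 2 := mul_lt_of_lt_one_left hpos hγ

end TemporalDifference

theorem ae_tendsto_of_linearTD_markov_general {S κ : Type*} [Fintype S] [DecidableEq S]
    [MeasurableSpace S] [MeasurableSingletonClass S] [Fintype κ] [DecidableEq κ]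
    {P : Matrix S S ℝ} (hP : P ∈ rowStochastic ℝ S) (hirr : ∀ i j, ∃ n : ℕ, 0 < (P ^ n) i j)
    {d : S → ℝ} (hd : d ∈ stdSimplex ℝ S) (hdP : d ᵥ* P = d)
    {X : Matrix S κ ℝ} (hX : Function.Injective X.mulVec) (r : S → ℝ) {γ : ℝ} (hγ : |γ| < 1)
    {α : ℕ → ℝ} (hα : IsRobbinsMonro α)
    {μ : Measure (ℕ → S)} [IsFiniteMeasure μ] (hμ : IsMarkovLaw P μ)
    {w : ℕ → (ℕ → S) → κ → ℝ}
    (hw : ∀ t ω, w (t + 1) ω = w t ω +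
      (α t * (r (ω t) + γ * (X (ω (t + 1)) ⬝ᵥ w t ω) - X (ω t) ⬝ᵥ w t ω)) • X (ω t)) :
    ∀ᵐ ω ∂μ, Tendsto (fun t => w t ω) atTop
      (nhds (-((tdMatrix X d P γ)⁻¹ *ᵥ tdVector X d r))) := by
  have hA := transitionMean_vecMulVec_eq_tdMatrix hP.2 X d γ
  have hdpos : ∀ i, 0 < d i := pos_of_vecMul_eq_self_s13 hP hirr hd hdP
  rw [← hA, ← transitionMean_smul_eq_tdVector hP.2]
  refine hμ.ae_tendsto_of_matrix_recursion hP hirr hd.2 hdP hα (fun u hu => ?_) fun t ω => ?_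
  · rw [hA]
    exact dotProduct_tdMatrix_mulVec_neg hP.1 hP.2 hdpos hdP hX hγ hu
  · rw [hw, vecMulVec_mulVec, op_smul_eq_smul, sub_dotProduct, smul_dotProduct, ← add_smul,
      smul_smul, smul_eq_mul]
    congr 3
    ring

/-- Almost sure convergence of linear TD with Markovian samples: on the trajectory
probability space (given by the Ionescu–Tulcea theorem, characterized here via its
cylinder probabilities), the linear TD iterates with step sizes `α_t = 1/(t+2)^ν`,
`ν ∈ (2/3, 1)`, converge almost surely to the TD fixed point `w* = −A⁻¹ b`. -/
theorem ae_tendsto_of_linearTD_markov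
    {S : Type*} [Fintype S] [Nonempty S] [DecidableEq S]
    [MeasurableSpace S] [MeasurableSingletonClass S] {K : ℕ}
    -- the transition matrix: row stochastic, irreducible, aperiodic
    (P : Matrix S S ℝ)
    (hnonneg : ∀ i j, 0 ≤ P i j)
    (hrowsum : ∀ i, ∑ j, P i j = 1)
    (hirr : ∀ i j, ∃ n : ℕ, 0 < (P ^ n) i j)
    (haper : ∀ i, ∀ e : ℕ, (∀ n ∈ returnTimes P i, e ∣ n) → e = 1)
    -- the stationary distribution
    (d : S → ℝ) (hdnonneg : ∀ s, 0 ≤ d s) (hdsum : ∑ s, d s = 1)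
    (hdstat : ∀ j, ∑ i, d i * P i j = d j)
    -- features with full column rank, rewards, discount
    (feat : S → Fin K → ℝ)
    (X : Matrix S (Fin K) ℝ) (hXfeat : X = Matrix.of feat)
    (hX : Function.Injective X.mulVec)
    (r : S → ℝ)
    (γ : ℝ) (hγ0 : 0 ≤ γ) (hγ1 : γ < 1)
    -- step sizes
    (ν : ℝ) (hν : ν ∈ Set.Ioo (2 / 3 : ℝ) 1)
    (α : ℕ → ℝ) (hα : α = fun t : ℕ => 1 / ((t : ℝ) + 2) ^ ν)
    -- the trajectory measure produced by the Ionescu–Tulcea theorem, characterized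
    -- by its cylinder probabilities
    (ι : S → ℝ) (hιnonneg : ∀ s, 0 ≤ ι s) (hιsum : ∑ s, ι s = 1)
    (μ : Measure (ℕ → S)) [IsProbabilityMeasure μ]
    (hμ : ∀ (n : ℕ) (ys : ℕ → S),
      μ {ω | ∀ i ≤ n, ω i = ys i} =
        ENNReal.ofReal (ι (ys 0) * ∏ i ∈ Finset.range n, P (ys i) (ys (i + 1))))
    -- the linear TD iterates
    (w₀ : Fin K → ℝ) (w : ℕ → (ℕ → S) → (Fin K → ℝ))
    (hw0 : ∀ ω, w 0 ω = w₀)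
    (hwstep : ∀ t ω, w (t + 1) ω = w t ω +
      (α t * (r (ω t) + γ * (∑ k, feat (ω (t + 1)) k * w t ω k)
        - ∑ k, feat (ω t) k * w t ω k)) • feat (ω t))
    -- the TD fixed point
    (A : Matrix (Fin K) (Fin K) ℝ)
    (hA : A = Xᵀ * Matrix.diagonal d * (γ • P - 1) * X)
    (b : Fin K → ℝ) (hb : b = (Xᵀ * Matrix.diagonal d).mulVec r)
    (wstar : Fin K → ℝ) (hwstar : wstar = -(A⁻¹.mulVec b)) :
    ∀ᵐ ω ∂μ, Tendsto (fun t => w t ω) atTop (nhds wstar) := by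
  subst hXfeat hα hA hb hwstar
  exact ae_tendsto_of_linearTD_markov_general (mem_rowStochastic_iff_sum.2 ⟨hnonneg, hrowsum⟩) hirr
    ⟨hdnonneg, hdsum⟩ (funext hdstat) hX r ((abs_of_nonneg hγ0).trans_lt hγ1)
    (isRobbinsMonro_one_div_add_rpow two_pos (by linarith [hν.1]) hν.2.le)
    (isMarkovLaw_of_measure_cylinder hnonneg hμ) hwstep
end
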